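/- arXiv:2010.00478 — 2 statements merged into one kernel-verified Lean document; each statement's English description precedes it below -/
import Mathlib

section
/- Let d be a positive integer and let μ₁, …, μ_{d+1} be finite measures on ℝ^d, each absolutely continuous with respect to the Lebesgue measure. Then there exist real numbers a, c and a vector b ∈ ℝ^d, not all zero, such that for the function f(x) = a·‖x‖² + ⟨b, x⟩ + c, one has μ_i({x : f(x) ≥ 0}) = μ_i({x : f(x) ≤ 0}) for every i = 1, …, d + 1. In particular, if a ≠ 0 the common boundary {x : f(x) = 0} is a sphere containing exactly half of each measure on each side. -/
open MeasureTheory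
open scoped RealInnerProductSpace

/-!
For `v = (a, b, c)` let `f_v x = a‖x‖² + ⟪b, x⟫ + c`. Zero sets of nonzero `f_v` are null, so
`v ↦ (μᵢ {f_v > 0} - μᵢ {f_v < 0})ᵢ` is an odd map, continuous away from `0`, from a space of
dimension `d + 2` to one of dimension `d + 1`. By the Borsuk–Ulam theorem it vanishes at some
`v ≠ 0`.

For the Borsuk–Ulam theorem, parametrize a hemisphere of the sphere in `ℝⁿ⁺¹` by a finely
triangulated cube `[0, 2M]ⁿ`. The signs of the `n` coordinates of an odd map are mod 2 cochains
`s₀, …, sₙ₋₁` on the vertices of the triangulation. The sum over all simplices of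
`δs₀ ⌣ ⋯ ⌣ δsₙ₋₁` is the sum of `s₀ ⌣ δs₁ ⌣ ⋯ ⌣ δsₙ₋₁` over the boundary of the cube. Its
facets `tᵢ = 0` and `tᵢ = 2M` cancel unless `i` is last; the last two are identified antipodally, so
that `s₀` changes by `1` and the `δsⱼ` do not change. What remains is the same sum one dimension
lower; by induction it is `1`. Hence some simplex has a sign change of the `j`-th coordinate along
its `j`-th edge for every `j`, the map is almost zero there, and compactness yields a zero.
-/

section CoboundaryCup

variable {R V : Type*} [CommRing R] {n : ℕ}

/-- The mod 2 cup product `δs₀ ⌣ ⋯ ⌣ δsₙ₋₁` of the coboundaries of the `0`-cochains `s j`,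
evaluated on the simplex with vertices `q`. -/
def coboundaryCup (s : Fin n → V → R) (q : Fin (n + 1) → V) : R :=
  ∏ j, (s j (q j.castSucc) + s j (q j.succ))

lemma coboundaryCup_succ (s : Fin (n + 1) → V → R) (q : Fin (n + 2) → V) :
    coboundaryCup s q =
      (s 0 (q 0) + s 0 (q 1)) * coboundaryCup (Fin.tail s) (Fin.tail q) :=
  Fin.prod_univ_succ _

lemma tail_comp_succ_succAbove (q : Fin (n + 2) → V) (k : Fin (n + 1)) :
    Fin.tail (q ∘ k.succ.succAbove) = Fin.tail q ∘ k.succAbove := by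
  funext l
  simp [Fin.tail]

/-- The cochain `s₀ ⌣ δs₁ ⌣ ⋯ ⌣ δsₙ`, whose coboundary is `δs₀ ⌣ δs₁ ⌣ ⋯ ⌣ δsₙ` by the Leibniz
rule. -/
def primitiveCup (s : Fin (n + 1) → V → R) (q : Fin (n + 1) → V) : R :=
  s 0 (q 0) * coboundaryCup (Fin.tail s) q

variable [CharP R 2]

lemma sum_coboundaryCup_face_eq_zero (s : Fin n → V → R) (q : Fin (n + 2) → V) :
    ∑ k : Fin (n + 2), coboundaryCup s (q ∘ k.succAbove) = 0 := by
  induction n with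
  | zero => simp [coboundaryCup, CharTwo.two_eq_zero]
  | succ n ih =>
    have face_zero : coboundaryCup s (q ∘ Fin.succAbove 0) =
        (s 0 (q 1) + s 0 (q 2)) * coboundaryCup (Fin.tail s) (Fin.tail q ∘ Fin.succAbove 0) := by
      simp only [Fin.succAbove_zero]
      exact coboundaryCup_succ s _
    have face_one : coboundaryCup s (q ∘ Fin.succAbove (Fin.succ 0)) =
        (s 0 (q 0) + s 0 (q 2)) * coboundaryCup (Fin.tail s) (Fin.tail q ∘ Fin.succAbove 0) := by
      rw [coboundaryCup_succ, tail_comp_succ_succAbove]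
      rfl
    have face_succ_succ (k : Fin (n + 1)) : coboundaryCup s (q ∘ k.succ.succ.succAbove) =
        (s 0 (q 0) + s 0 (q 1)) * coboundaryCup (Fin.tail s) (Fin.tail q ∘ k.succ.succAbove) := by
      rw [coboundaryCup_succ, tail_comp_succ_succAbove]
      simp
    have closed := ih (Fin.tail s) (Fin.tail q)
    rw [Fin.sum_univ_succ] at closed
    rw [Fin.sum_univ_succ, Fin.sum_univ_succ, face_zero, face_one,
      Finset.sum_congr rfl fun k _ ↦ face_succ_succ k, ← Finset.mul_sum]
    linear_combination (s 0 (q 0) + s 0 (q 1)) * closed + s 0 (q 2) *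
      CharTwo.add_self_eq_zero (coboundaryCup (Fin.tail s) (Fin.tail q ∘ Fin.succAbove 0))

lemma coboundaryCup_eq_sum_primitiveCup_face (s : Fin (n + 1) → V → R) (q : Fin (n + 2) → V) :
    coboundaryCup s q = ∑ k : Fin (n + 2), primitiveCup s (q ∘ k.succAbove) := by
  have closed := sum_coboundaryCup_face_eq_zero (Fin.tail s) q
  have face_zero : q ∘ Fin.succAbove 0 = Fin.tail q := by
    simp only [Fin.succAbove_zero]
    rfl
  rw [Fin.sum_univ_succ, face_zero] at closed
  simp only [coboundaryCup_succ, primitiveCup, Fin.sum_univ_succ (n := n + 1),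
    Function.comp_apply, Fin.succ_succAbove_zero, ← Finset.mul_sum, face_zero,
    Fin.zero_succAbove, Fin.succ_zero_eq_one]
  linear_combination - s 0 (q 0) * closed +
    s 0 (q 0) * CharTwo.add_self_eq_zero (coboundaryCup (Fin.tail s) (Fin.tail q))

end CoboundaryCup

/-- A unit interval of the subdivision of `[0, 2M]` into `2M` intervals: the pair `(c, b)` stands
for the one joining the odd point `2c + 1` to `2c + 2` if `b` holds, and to `2c` otherwise. -/
abbrev GridCell (M : ℕ) : Type := Fin M × Bool

namespace GridCell

variable {M : ℕ}

/-- The even endpoint of a cell. -/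
def evenEnd (c : GridCell M) : ℤ := 2 * c.1 + if c.2 then 2 else 0

/-- The odd endpoint of a cell. -/
def oddEnd (c : GridCell M) : ℤ := 2 * c.1 + 1

/-- The cell on the other side of the odd endpoint. -/
def acrossOdd (c : GridCell M) : GridCell M := (c.1, !c.2)

/-- The image of a cell under `t ↦ 2M - t`. -/
def reflect (c : GridCell M) : GridCell M := (c.1.rev, !c.2)

@[simp] lemma acrossOdd_acrossOdd (c : GridCell M) : c.acrossOdd.acrossOdd = c := by
  simp [acrossOdd]

lemma acrossOdd_ne_self (c : GridCell M) : c.acrossOdd ≠ c := by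
  simp [acrossOdd, Prod.ext_iff]

@[simp] lemma oddEnd_acrossOdd (c : GridCell M) : c.acrossOdd.oddEnd = c.oddEnd := rfl

@[simp] lemma reflect_reflect (c : GridCell M) : c.reflect.reflect = c := by
  simp [reflect]

@[simp] lemma oddEnd_reflect (c : GridCell M) : c.reflect.oddEnd = 2 * M - c.oddEnd := by
  simp only [reflect, oddEnd, Fin.val_rev]
  omega

@[simp] lemma evenEnd_reflect (c : GridCell M) : c.reflect.evenEnd = 2 * M - c.evenEnd := by
  rcases c with ⟨c, _ | _⟩ <;> simp only [reflect, evenEnd, Fin.val_rev] <;> grind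

-- Every interior even point is the even endpoint of two cells, which cancel.
lemma sum_evenEnd {R : Type*} [CommRing R] [CharP R 2] (G : ℤ → R) :
    ∑ c : GridCell M, G c.evenEnd = G 0 + G (2 * M) := by
  simp only [Fintype.sum_prod_type, Fintype.sum_bool, evenEnd, if_true, Bool.false_eq_true,
    if_false, add_zero]
  rw [Fin.sum_univ_eq_sum_range fun c : ℕ ↦ G (2 * (c : ℤ) + 2) + G (2 * (c : ℤ))]
  calc ∑ c ∈ Finset.range M, (G (2 * (c : ℤ) + 2) + G (2 * (c : ℤ)))
      = ∑ c ∈ Finset.range M, (G (2 * ((c + 1 : ℕ) : ℤ)) - G (2 * (c : ℤ))) := by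
        simp only [CharTwo.sub_eq_add, Nat.cast_add, Nat.cast_one, mul_add, mul_one]
    _ = G (2 * M) - G 0 := by
      simpa using Finset.sum_range_sub (fun c : ℕ ↦ G (2 * (c : ℤ))) M
    _ = G 0 + G (2 * M) := by rw [CharTwo.sub_eq_add, add_comm]

end GridCell

/-- A simplex of the triangulation of the cube `[0, 2M]ⁿ` whose vertices have integer coordinates:
the pair `(h, τ)` stands for the simplex obtained by starting from the even endpoints of the cells
`h i` and moving the coordinate `i` to its odd endpoint at time `τ i`. -/
abbrev GridSimplex (M n : ℕ) : Type := (Fin n → GridCell M) × Equiv.Perm (Fin n)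

namespace GridSimplex

variable {M n : ℕ}

/-- The `k`-th vertex of a simplex, in the order in which the coordinates are moved. -/
def vertex (σ : GridSimplex M n) (k : Fin (n + 1)) (i : Fin n) : ℤ :=
  if (σ.2 i).castSucc < k then (σ.1 i).oddEnd else (σ.1 i).evenEnd

lemma vertex_mem_Icc (σ : GridSimplex M n) (k : Fin (n + 1)) (i : Fin n) :
    σ.vertex k i ∈ Set.Icc 0 (2 * M : ℤ) := by
  have := (σ.1 i).1.isLt
  simp only [vertex, GridCell.oddEnd, GridCell.evenEnd, Set.mem_Icc]
  split_ifs <;> omega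

lemma abs_vertex_sub_vertex_le_one (σ : GridSimplex M n) (k l : Fin (n + 1)) (i : Fin n) :
    |σ.vertex k i - σ.vertex l i| ≤ 1 := by
  rw [abs_le]
  simp only [vertex, GridCell.oddEnd, GridCell.evenEnd]
  split_ifs <;> omega

/-- The neighbour of a simplex across the facet opposite to its vertex `0`. -/
def neighborZero (σ : GridSimplex M (n + 1)) : GridSimplex M (n + 1) :=
  (Function.update σ.1 (σ.2.symm 0) (σ.1 (σ.2.symm 0)).acrossOdd, σ.2)

/-- The neighbour of a simplex across the facet opposite to its vertex `j + 1`. -/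
def neighborSucc (j : Fin n) (σ : GridSimplex M (n + 1)) : GridSimplex M (n + 1) :=
  (σ.1, Equiv.swap j.castSucc j.succ * σ.2)

lemma vertex_neighborZero (σ : GridSimplex M (n + 1)) (k : Fin (n + 1)) :
    σ.neighborZero.vertex k.succ = σ.vertex k.succ := by
  funext i
  rcases eq_or_ne i (σ.2.symm 0) with rfl | hi
  · simp [vertex, neighborZero]
  · simp [vertex, neighborZero, hi]

lemma vertex_neighborSucc (j : Fin n) (σ : GridSimplex M (n + 1)) (k : Fin (n + 2))
    (hk : k ≠ j.succ.castSucc) : (σ.neighborSucc j).vertex k = σ.vertex k := by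
  funext i
  have swap_lt_iff : (Equiv.swap j.castSucc j.succ (σ.2 i)).castSucc < k ↔
      (σ.2 i).castSucc < k := by
    simp only [Equiv.swap_apply_def]
    grind
  simp [vertex, neighborSucc, swap_lt_iff]

lemma neighborZero_involutive :
    Function.Involutive (neighborZero : GridSimplex M (n + 1) → GridSimplex M (n + 1)) := by
  intro σ
  simp [neighborZero]

lemma neighborSucc_involutive (j : Fin n) :
    Function.Involutive (neighborSucc j : GridSimplex M (n + 1) → GridSimplex M (n + 1)) := by
  intro σ
  simp [neighborSucc, ← mul_assoc]

lemma neighborZero_ne_self (σ : GridSimplex M (n + 1)) : σ.neighborZero ≠ σ := by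
  intro h
  have := congrFun (congrArg Prod.fst h) (σ.2.symm 0)
  exact GridCell.acrossOdd_ne_self _ (by simpa [neighborZero] using this)

lemma neighborSucc_ne_self (j : Fin n) (σ : GridSimplex M (n + 1)) : σ.neighborSucc j ≠ σ := by
  intro h
  have := congrArg Prod.snd h
  rw [neighborSucc, mul_eq_right, Equiv.swap_eq_one_iff] at this
  exact (Fin.castSucc_lt_succ (i := j)).ne this

/-- The image of a simplex under the reflection `tᵢ ↦ 2M - tᵢ` of the cube. -/
def reflect (i : Fin n) (σ : GridSimplex M n) : GridSimplex M n :=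
  (Function.update σ.1 i (σ.1 i).reflect, σ.2)

lemma reflect_involutive (i : Fin n) :
    Function.Involutive (reflect i : GridSimplex M n → GridSimplex M n) := by
  intro σ
  simp [reflect]

lemma vertex_reflect (i : Fin n) (σ : GridSimplex M n) (k : Fin (n + 1)) :
    (σ.reflect i).vertex k = Function.update (σ.vertex k) i (2 * M - σ.vertex k i) := by
  funext j
  rcases eq_or_ne j i with rfl | hj
  · simp only [vertex, reflect, Function.update_self]
    split_ifs <;> simp
  · simp [vertex, reflect, hj]

/-- The permutation of `Fin (n + 1)` sending `i` to the last element and permuting the others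
like `τ`. -/
def extendPerm (i : Fin (n + 1)) (τ : Equiv.Perm (Fin n)) : Equiv.Perm (Fin (n + 1)) :=
  ((finSuccEquiv' i).trans (Equiv.optionCongr τ)).trans (finSuccEquiv' (Fin.last n)).symm

@[simp] lemma extendPerm_self (i : Fin (n + 1)) (τ : Equiv.Perm (Fin n)) :
    extendPerm i τ i = Fin.last n := by
  simp [extendPerm]

@[simp] lemma extendPerm_succAbove (i : Fin (n + 1)) (τ : Equiv.Perm (Fin n)) (j : Fin n) :
    extendPerm i τ (i.succAbove j) = (τ j).castSucc := by
  simp [extendPerm]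

/-- The simplex of the `(n + 1)`-dimensional cube that first runs through the simplex `σ` in the
coordinates other than `i` and then moves the coordinate `i` along the cell `c`. -/
def extend (i : Fin (n + 1)) (c : GridCell M) (σ : GridSimplex M n) : GridSimplex M (n + 1) :=
  (i.insertNth c σ.1, extendPerm i σ.2)

lemma vertex_extend_castSucc (i : Fin (n + 1)) (c : GridCell M) (σ : GridSimplex M n)
    (k : Fin (n + 1)) :
    (extend i c σ).vertex k.castSucc = i.insertNth c.evenEnd (σ.vertex k) := by
  funext j
  refine i.succAboveCases ?_ (fun j ↦ ?_) j
  · simp [vertex, extend, Fin.le_last]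
  · simp [vertex, extend]

lemma extend_bijective : Function.Bijective
    fun x : Fin (n + 1) × GridSimplex M n × GridCell M ↦ extend x.1 x.2.2 x.2.1 := by
  rw [Fintype.bijective_iff_injective_and_card]
  constructor
  · rintro ⟨i, ⟨h, τ⟩, c⟩ ⟨i', ⟨h', τ'⟩, c'⟩ heq
    obtain ⟨hcells, hperm⟩ := Prod.ext_iff.1 heq
    dsimp only [extend] at hcells hperm
    obtain rfl : i = i' := by
      apply (extendPerm i' τ').injective
      rw [extendPerm_self, ← hperm, extendPerm_self]
    obtain ⟨rfl, rfl⟩ := Fin.insertNth_inj.1 hcells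
    obtain rfl : τ = τ' := by
      ext j
      simpa using congrArg Fin.val (DFunLike.congr_fun hperm (i.succAbove j))
    rfl
  · simp only [Fintype.card_prod, Fintype.card_fin, Fintype.card_bool, Fintype.card_pi_const,
      Fintype.card_perm, Nat.factorial_succ]
    ring

lemma sum_reflect {A : Type*} [AddCommMonoid A] (i : Fin n)
    (β : (Fin (n + 1) → Fin n → ℤ) → A) :
    ∑ σ : GridSimplex M n, β (fun k ↦ Function.update (σ.vertex k) i (2 * M - σ.vertex k i)) =
      ∑ σ : GridSimplex M n, β σ.vertex := by
  simp only [← vertex_reflect]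
  exact (reflect_involutive i).bijective.sum_comp fun σ : GridSimplex M n ↦ β σ.vertex

variable {R : Type*} [CommRing R] [CharP R 2]

lemma sum_face_eq_zero_of_involutive {k : Fin (n + 2)}
    {neighbor : GridSimplex M (n + 1) → GridSimplex M (n + 1)}
    (hinv : Function.Involutive neighbor) (hne : ∀ σ, neighbor σ ≠ σ)
    (hvertex : ∀ σ (l : Fin (n + 1)),
      (neighbor σ).vertex (k.succAbove l) = σ.vertex (k.succAbove l))
    (γ : (Fin (n + 1) → Fin (n + 1) → ℤ) → R) :
    ∑ σ : GridSimplex M (n + 1), γ (σ.vertex ∘ k.succAbove) = 0 := by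
  refine Finset.sum_involution (fun σ _ ↦ neighbor σ) (fun σ _ ↦ ?_) (fun σ _ _ ↦ hne σ)
    (fun σ _ ↦ Finset.mem_univ _) (fun σ _ ↦ hinv σ)
  rw [show (neighbor σ).vertex ∘ k.succAbove = σ.vertex ∘ k.succAbove from funext (hvertex σ),
    CharTwo.add_self_eq_zero]

lemma sum_face_castSucc_eq_zero (k : Fin (n + 1)) (γ : (Fin (n + 1) → Fin (n + 1) → ℤ) → R) :
    ∑ σ : GridSimplex M (n + 1), γ (σ.vertex ∘ k.castSucc.succAbove) = 0 := by
  refine Fin.cases ?_ (fun j ↦ ?_) k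
  · exact sum_face_eq_zero_of_involutive neighborZero_involutive neighborZero_ne_self
      (fun σ l ↦ by simpa using σ.vertex_neighborZero l) γ
  · exact sum_face_eq_zero_of_involutive (neighborSucc_involutive j) (neighborSucc_ne_self j)
      (fun σ l ↦ σ.vertex_neighborSucc j _ (Fin.succAbove_ne _ l)) γ

lemma sum_face_last (γ : (Fin (n + 1) → Fin (n + 1) → ℤ) → R) :
    ∑ σ : GridSimplex M (n + 1), γ (σ.vertex ∘ (Fin.last (n + 1)).succAbove) =
      ∑ i : Fin (n + 1), ∑ σ : GridSimplex M n, (γ (fun k ↦ i.insertNth 0 (σ.vertex k)) +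
        γ (fun k ↦ i.insertNth (2 * M : ℤ) (σ.vertex k))) := by
  rw [← extend_bijective.sum_comp]
  simp only [Fintype.sum_prod_type (α₁ := Fin (n + 1)),
    Fintype.sum_prod_type (α₁ := GridSimplex M n), Fin.succAbove_last]
  refine Finset.sum_congr rfl fun i _ ↦ Finset.sum_congr rfl fun σ _ ↦ ?_
  rw [← GridCell.sum_evenEnd fun v ↦ γ fun k ↦ i.insertNth v (σ.vertex k)]
  exact Finset.sum_congr rfl fun c _ ↦ congrArg γ (funext (vertex_extend_castSucc i c σ))

-- The Stokes formula: every interior facet is shared by two simplices.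
lemma sum_sum_face (γ : (Fin (n + 1) → Fin (n + 1) → ℤ) → R) :
    ∑ σ : GridSimplex M (n + 1), ∑ k : Fin (n + 2), γ (σ.vertex ∘ k.succAbove) =
      ∑ i : Fin (n + 1), ∑ σ : GridSimplex M n, (γ (fun k ↦ i.insertNth 0 (σ.vertex k)) +
        γ (fun k ↦ i.insertNth (2 * M : ℤ) (σ.vertex k))) := by
  rw [Finset.sum_comm, Fin.sum_univ_castSucc, sum_face_last,
    Finset.sum_eq_zero fun k _ ↦ sum_face_castSucc_eq_zero k γ, zero_add]

end GridSimplex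

/-- The gluing conditions on a labelling of the grid points of `[0, 2M]ⁿ` that hold for the pullback
of an odd labelling of the sphere along the parametrization of a hemisphere: the facet `tᵢ = 2M`
is glued to the facet `tᵢ = 0` with the coordinate `tᵢ₊₁` reflected, except that the last facet is
glued antipodally. -/
structure IsAntipodalLabelling {R : Type*} [CommRing R] (M : ℕ) {n : ℕ}
    (s : (Fin n → ℤ) → R) : Prop where
  glue : ∀ i j : Fin n, (j : ℕ) = i + 1 → ∀ t : Fin n → ℤ, t i = 2 * M →
    s t = s (Function.update (Function.update t i 0) j (2 * M - t j))
  glue_last : ∀ i : Fin n, (i : ℕ) + 1 = n → ∀ t : Fin n → ℤ, t i = 2 * M →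
    s t = 1 + s (Function.update t i 0)

namespace IsAntipodalLabelling

variable {R : Type*} [CommRing R] {M n : ℕ}

lemma snoc_two_mul {s : (Fin (n + 1) → ℤ) → R} (hs : IsAntipodalLabelling M s) (x : Fin n → ℤ) :
    s (Fin.snoc (α := fun _ ↦ ℤ) x (2 * M)) = 1 + s (Fin.snoc (α := fun _ ↦ ℤ) x 0) := by
  rw [hs.glue_last (Fin.last n) (by simp) _ (by simp), Fin.update_snoc_last]

lemma insertNth_castSucc_two_mul {s : (Fin (n + 1) → ℤ) → R} (hs : IsAntipodalLabelling M s)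
    (i : Fin n) (x : Fin n → ℤ) :
    s (i.castSucc.insertNth (α := fun _ ↦ ℤ) (2 * M) x) =
      s (i.castSucc.insertNth (α := fun _ ↦ ℤ) 0 (Function.update x i (2 * M - x i))) := by
  have succ_eq : i.succ = i.castSucc.succAbove i := by simp
  rw [hs.glue i.castSucc i.succ (by simp) _ (by simp)]
  congr 1
  rw [succ_eq, Fin.insertNth_apply_succAbove, Fin.update_insertNth, Fin.insertNth_update]

lemma snoc_zero {s : (Fin (n + 1) → ℤ) → R} (hs : IsAntipodalLabelling M s) :
    IsAntipodalLabelling M fun x : Fin n → ℤ ↦ s (Fin.snoc (α := fun _ ↦ ℤ) x 0) where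
  glue i j hij t ht := by
    simpa [Fin.snoc_update] using hs.glue i.castSucc j.castSucc (by simpa using hij)
      (Fin.snoc (α := fun _ ↦ ℤ) t 0) (by simpa using ht)
  glue_last i hi t ht := by
    rw [← hs.snoc_two_mul, hs.glue i.castSucc (Fin.last n) (by simpa using hi.symm)
      (Fin.snoc (α := fun _ ↦ ℤ) t 0) (by simpa using ht)]
    simp [← Fin.snoc_update, Fin.update_snoc_last]

variable [CharP R 2]

lemma coboundaryCup_snoc_two_mul {s : Fin n → (Fin (n + 1) → ℤ) → R}
    (hs : ∀ j, IsAntipodalLabelling M (s j)) (q : Fin (n + 1) → Fin n → ℤ) :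
    coboundaryCup s (fun k ↦ Fin.snoc (α := fun _ ↦ ℤ) (q k) (2 * M)) =
      coboundaryCup s (fun k ↦ Fin.snoc (α := fun _ ↦ ℤ) (q k) 0) := by
  refine Finset.prod_congr rfl fun j _ ↦ ?_
  rw [(hs j).snoc_two_mul, (hs j).snoc_two_mul]
  linear_combination CharTwo.add_self_eq_zero (1 : R)

lemma primitiveCup_snoc_zero_add_two_mul {s : Fin (n + 1) → (Fin (n + 1) → ℤ) → R}
    (hs : ∀ j, IsAntipodalLabelling M (s j)) (q : Fin (n + 1) → Fin n → ℤ) :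
    primitiveCup s (fun k ↦ Fin.snoc (α := fun _ ↦ ℤ) (q k) 0) +
        primitiveCup s (fun k ↦ Fin.snoc (α := fun _ ↦ ℤ) (q k) (2 * M)) =
      coboundaryCup (fun j x ↦ s j.succ (Fin.snoc (α := fun _ ↦ ℤ) x 0)) q := by
  rw [primitiveCup, primitiveCup, (hs 0).snoc_two_mul,
    coboundaryCup_snoc_two_mul (s := Fin.tail s) fun j ↦ hs j.succ, ← add_mul,
    add_left_comm, CharTwo.add_self_eq_zero, add_zero, one_mul]
  rfl

lemma sum_primitiveCup_insertNth_castSucc_eq_zero {s : Fin (n + 1) → (Fin (n + 1) → ℤ) → R}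
    (hs : ∀ j, IsAntipodalLabelling M (s j)) (i : Fin n) :
    ∑ σ : GridSimplex M n,
      (primitiveCup s (fun k ↦ i.castSucc.insertNth 0 (σ.vertex k)) +
        primitiveCup s (fun k ↦ i.castSucc.insertNth (2 * M : ℤ) (σ.vertex k))) = 0 := by
  have reflect_facet (q : Fin (n + 1) → Fin n → ℤ) :
      primitiveCup s (fun k ↦ i.castSucc.insertNth (2 * M : ℤ) (q k)) =
        primitiveCup s
          (fun k ↦ i.castSucc.insertNth 0 (Function.update (q k) i (2 * M - q k i))) := by
    simp only [primitiveCup, coboundaryCup, Fin.tail, (hs _).insertNth_castSucc_two_mul]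
  simp only [reflect_facet, Finset.sum_add_distrib]
  rw [GridSimplex.sum_reflect i fun q ↦ primitiveCup s fun k ↦ i.castSucc.insertNth 0 (q k),
    CharTwo.add_self_eq_zero]

-- The nonvanishing of the top power of the generator of `H¹(ℝPⁿ; 𝔽₂)`.
theorem sum_coboundaryCup_eq_one {s : Fin n → (Fin n → ℤ) → R}
    (hs : ∀ j, IsAntipodalLabelling M (s j)) :
    ∑ σ : GridSimplex M n, coboundaryCup s σ.vertex = 1 := by
  induction n with
  | zero => simp [coboundaryCup]
  | succ n ih =>
    calc ∑ σ : GridSimplex M (n + 1), coboundaryCup s σ.vertex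
        = ∑ σ : GridSimplex M (n + 1), ∑ k : Fin (n + 2),
            primitiveCup s (σ.vertex ∘ k.succAbove) := by
          simp only [coboundaryCup_eq_sum_primitiveCup_face]
      _ = ∑ σ : GridSimplex M n,
            coboundaryCup (fun j x ↦ s j.succ (Fin.snoc (α := fun _ ↦ ℤ) x 0)) σ.vertex := by
          rw [GridSimplex.sum_sum_face, Fin.sum_univ_castSucc, Finset.sum_eq_zero fun i _ ↦
            sum_primitiveCup_insertNth_castSucc_eq_zero hs i, zero_add]
          simp only [Fin.insertNth_last', primitiveCup_snoc_zero_add_two_mul hs]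
      _ = 1 := ih fun j ↦ (hs j.succ).snoc_zero

end IsAntipodalLabelling

section Hemisphere

variable {n : ℕ}

/-- A parametrization, up to positive scaling, of a hemisphere of the unit sphere of `ℝⁿ⁺¹` by the
cube `[0, 1]ⁿ`. The last coordinate of the cube is the parameter of an arc from a point of the
lower-dimensional hemisphere through the pole to the antipodal point. -/
def hemisphere : (n : ℕ) → (Fin n → ℝ) → Fin (n + 1) → ℝ
  | 0, _ => 1
  | n + 1, t => Fin.snoc (α := fun _ ↦ ℝ) ((1 - 2 * t (Fin.last n)) • hemisphere n (Fin.init t))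
      (t (Fin.last n) * (1 - t (Fin.last n)))

lemma continuous_hemisphere (n : ℕ) : Continuous (hemisphere n) := by
  induction n with
  | zero => exact continuous_const
  | succ n ih =>
    have : Continuous fun t : Fin (n + 1) → ℝ ↦ hemisphere n (Fin.init t) :=
      ih.comp (continuous_id.finInit (A := fun _ ↦ ℝ))
    exact Continuous.finSnoc (A := fun _ ↦ ℝ) (by fun_prop) (by fun_prop)

lemma hemisphere_ne_zero (t : Fin n → ℝ) : hemisphere n t ≠ 0 := by
  induction n with
  | zero => exact one_ne_zero
  | succ n ih =>
    intro h
    have hlast : t (Fin.last n) * (1 - t (Fin.last n)) = 0 := by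
      simpa [hemisphere] using congrFun h (Fin.last (n + 1))
    have hinit : (1 - 2 * t (Fin.last n)) • hemisphere n (Fin.init t) = 0 := by
      funext i
      simpa [hemisphere] using congrFun h i.castSucc
    have hhalf := (smul_eq_zero.1 hinit).resolve_right (ih _)
    nlinarith

lemma hemisphere_eq_neg {i : Fin n} (hi : (i : ℕ) + 1 = n) {t : Fin n → ℝ} (ht : t i = 1) :
    hemisphere n t = -hemisphere n (Function.update t i 0) := by
  rcases n with _ | n
  · exact i.elim0
  obtain rfl : i = Fin.last n := Fin.ext (by simpa using hi)
  funext k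
  refine Fin.lastCases ?_ (fun k ↦ ?_) k
  · simp [hemisphere, ht]
  · simp only [hemisphere, ht, Fin.snoc_castSucc, Fin.init_update_last, Function.update_self,
      Pi.neg_apply, Pi.smul_apply, smul_eq_mul]
    ring

lemma hemisphere_eq_hemisphere_reflect {i j : Fin n} (hij : (j : ℕ) = i + 1) {t : Fin n → ℝ}
    (ht : t i = 1) :
    hemisphere n t = hemisphere n (Function.update (Function.update t i 0) j (1 - t j)) := by
  induction n with
  | zero => exact i.elim0
  | succ n ih =>
    obtain ⟨i, rfl⟩ : ∃ i' : Fin n, i = i'.castSucc := ⟨⟨i, by omega⟩, rfl⟩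
    rcases Fin.eq_castSucc_or_eq_last j with ⟨j, rfl⟩ | rfl
    · have hrec := ih (i := i) (j := j) (by simpa using hij) (t := Fin.init t) ht
      simp only [hemisphere, Fin.init_update_castSucc, hrec,
        Function.update_of_ne (Fin.castSucc_ne_last _).symm]
      rfl
    · have hneg := hemisphere_eq_neg (i := i) (by simpa using hij.symm) (t := Fin.init t) ht
      simp only [hemisphere, Fin.init_update_last, Fin.init_update_castSucc,
        Function.update_self, hneg]
      congr 1
      · module
      · ring

/-- The point of the unit cube corresponding to a grid point of `[0, 2M]ⁿ`. -/
noncomputable def gridScale (M : ℕ) (t : Fin n → ℤ) : Fin n → ℝ := fun i ↦ t i / (2 * M)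

lemma gridScale_update (M : ℕ) (t : Fin n → ℤ) (i : Fin n) (a : ℤ) :
    gridScale M (Function.update t i a) =
      Function.update (gridScale M t) i ((a : ℝ) / (2 * M)) := by
  funext k
  exact Function.apply_update (fun _ (a : ℤ) ↦ (a : ℝ) / (2 * M)) t i a k

lemma isAntipodalLabelling_hemisphere {R : Type*} [CommRing R] {M : ℕ} (hM : 0 < M)
    {ℓ : (Fin (n + 1) → ℝ) → R} (hℓ : ∀ v ≠ 0, ℓ (-v) = 1 + ℓ v) :
    IsAntipodalLabelling M fun t : Fin n → ℤ ↦ ℓ (hemisphere n (gridScale M t)) := by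
  have hM' : (M : ℝ) ≠ 0 := by positivity
  have gridScale_eq_one {t : Fin n → ℤ} {i : Fin n} (h : t i = 2 * M) : gridScale M t i = 1 := by
    simp only [gridScale, h]
    push_cast
    field_simp
  refine ⟨fun i j hij t ht ↦ ?_, fun i hi t ht ↦ ?_⟩
  · have hreflect : ((2 * M - t j : ℤ) : ℝ) / (2 * M) = 1 - gridScale M t j := by
      simp only [gridScale]
      push_cast
      field_simp
    rw [hemisphere_eq_hemisphere_reflect hij (gridScale_eq_one ht), gridScale_update,
      gridScale_update, hreflect, Int.cast_zero, zero_div]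
  · rw [hemisphere_eq_neg hi (gridScale_eq_one ht), hℓ _ (hemisphere_ne_zero _),
      gridScale_update, Int.cast_zero, zero_div]

lemma gridScale_vertex_mem_Icc {M : ℕ} (σ : GridSimplex M n) (k : Fin (n + 1)) :
    gridScale M (σ.vertex k) ∈ Set.Icc 0 1 := by
  refine ⟨fun i ↦ ?_, fun i ↦ ?_⟩
  · have : (0 : ℝ) ≤ σ.vertex k i := mod_cast (σ.vertex_mem_Icc k i).1
    simp only [gridScale, Pi.zero_apply]
    positivity
  · have : (σ.vertex k i : ℝ) ≤ 2 * M := mod_cast (σ.vertex_mem_Icc k i).2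
    exact div_le_one_of_le₀ this (by positivity)

lemma dist_gridScale_vertex_le {M : ℕ} (σ : GridSimplex M n) (k l : Fin (n + 1)) :
    dist (gridScale M (σ.vertex k)) (gridScale M (σ.vertex l)) ≤ 1 / (2 * M) := by
  refine (dist_pi_le_iff (by positivity)).2 fun i ↦ ?_
  have : |(σ.vertex k i : ℝ) - σ.vertex l i| ≤ 1 := mod_cast σ.abs_vertex_sub_vertex_le_one k l i
  rw [Real.dist_eq, gridScale, gridScale, ← sub_div, abs_div,
    abs_of_nonneg (by positivity : (0 : ℝ) ≤ 2 * M)]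
  gcongr

end Hemisphere

section SignLabel

/-- The mod 2 sign of `f v`. Ties at the zeros of `f` are broken by the lexicographic sign of `v`,
so that the label of `-v` differs from that of `v ≠ 0` whenever `f (-v) = -f v`. -/
noncomputable def signLabel {n : ℕ} (f : (Fin n → ℝ) → ℝ) (v : Fin n → ℝ) : ZMod 2 :=
  if 0 < toLex (f v, toLex v) then 1 else 0

variable {n : ℕ} {f : (Fin n → ℝ) → ℝ} {v w : Fin n → ℝ}

lemma signLabel_neg (hv : v ≠ 0) (hf : f (-v) = -f v) : signLabel f (-v) = 1 + signLabel f v := by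
  have hne : toLex (f v, toLex v) ≠ 0 := fun h ↦
    hv (congrArg Prod.snd h)
  have hneg : toLex (f (-v), toLex (-v)) = -toLex (f v, toLex v) := by
    rw [hf]
    rfl
  rw [signLabel, signLabel, hneg]
  rcases hne.lt_or_gt with h | h
  · rw [if_pos (neg_pos.2 h), if_neg h.not_gt, add_zero]
  · rw [if_neg (neg_neg_iff_pos.2 h).not_gt, if_pos h, CharTwo.add_self_eq_zero]

lemma mul_nonpos_of_signLabel_ne (h : signLabel f v ≠ signLabel f w) : f v * f w ≤ 0 := by
  by_contra! hpos
  have pos_iff (u : Fin n → ℝ) (hu : f u ≠ 0) : 0 < toLex (f u, toLex u) ↔ 0 < f u := by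
    simp [← toLex_zero, ← Prod.mk_zero_zero, Prod.Lex.toLex_lt_toLex, hu.symm]
  refine h (if_congr ?_ rfl rfl)
  rw [pos_iff v (left_ne_zero_of_mul hpos.ne'), pos_iff w (right_ne_zero_of_mul hpos.ne'),
    pos_iff_pos_of_mul_pos hpos]

end SignLabel

lemma abs_le_abs_sub_of_mul_nonpos {a b : ℝ} (h : a * b ≤ 0) : |a| ≤ |a - b| :=
  sq_le_sq.1 (by nlinarith [sq_nonneg b])

section BorsukUlam

variable {n : ℕ}

lemma exists_gridSimplex_signLabel_ne {M : ℕ} (hM : 0 < M) {g : (Fin (n + 1) → ℝ) → Fin n → ℝ}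
    (hodd : ∀ v ≠ 0, g (-v) = -g v) :
    ∃ σ : GridSimplex M n, ∀ j : Fin n,
      signLabel (g · j) (hemisphere n (gridScale M (σ.vertex j.castSucc))) ≠
        signLabel (g · j) (hemisphere n (gridScale M (σ.vertex j.succ))) := by
  have hsum := IsAntipodalLabelling.sum_coboundaryCup_eq_one fun j : Fin n ↦
    isAntipodalLabelling_hemisphere hM (ℓ := signLabel (g · j)) fun v hv ↦
      signLabel_neg hv (congrFun (hodd v hv) j)
  obtain ⟨σ, -, hσ⟩ := Finset.exists_ne_zero_of_sum_ne_zero (hsum.trans_ne one_ne_zero)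
  exact ⟨σ, fun j hj ↦ Finset.prod_ne_zero_iff.1 hσ j (Finset.mem_univ j)
    (CharTwo.add_eq_zero.2 hj)⟩

lemma norm_lt_of_forall_mul_nonpos {x : Fin (n + 1) → Fin n → ℝ} {ε : ℝ} (hε : 0 < ε)
    (hdist : ∀ k l, dist (x k) (x l) < ε / 2)
    (hsign : ∀ j : Fin n, x j.castSucc j * x j.succ j ≤ 0) : ‖x 0‖ < ε := by
  refine (pi_norm_lt_iff hε).2 fun j ↦ ?_
  have coord_dist (k l : Fin (n + 1)) : |x k j - x l j| < ε / 2 :=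
    (dist_le_pi_dist (x k) (x l) j).trans_lt (hdist k l)
  calc |x 0 j| ≤ |x 0 j - x j.castSucc j| + |x j.castSucc j| := by
        simpa using abs_add_le (x 0 j - x j.castSucc j) (x j.castSucc j)
    _ ≤ |x 0 j - x j.castSucc j| + |x j.castSucc j - x j.succ j| :=
        add_le_add le_rfl (abs_le_abs_sub_of_mul_nonpos (hsign j))
    _ < ε := by linarith [coord_dist 0 j.castSucc, coord_dist j.castSucc j.succ]

lemma exists_norm_hemisphere_lt {g : (Fin (n + 1) → ℝ) → Fin n → ℝ}
    (hodd : ∀ v ≠ 0, g (-v) = -g v) (hcont : ContinuousOn g {0}ᶜ) {ε : ℝ} (hε : 0 < ε) :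
    ∃ t ∈ Set.Icc (0 : Fin n → ℝ) 1, ‖g (hemisphere n t)‖ < ε := by
  have hcomp : Continuous fun t ↦ g (hemisphere n t) :=
    hcont.comp_continuous (continuous_hemisphere n) hemisphere_ne_zero
  obtain ⟨δ, hδ, hclose⟩ := Metric.uniformContinuousOn_iff.1
    (isCompact_Icc.uniformContinuousOn_of_continuous hcomp.continuousOn) (ε / 2) (half_pos hε)
  obtain ⟨M, hM⟩ := exists_nat_one_div_lt hδ
  obtain ⟨σ, hσ⟩ := exists_gridSimplex_signLabel_ne M.succ_pos hodd
  refine ⟨gridScale (M + 1) (σ.vertex 0), gridScale_vertex_mem_Icc σ 0,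
    norm_lt_of_forall_mul_nonpos (x := fun k ↦ g (hemisphere n (gridScale (M + 1) (σ.vertex k))))
      hε (fun k l ↦ ?_) fun j ↦ mul_nonpos_of_signLabel_ne (hσ j)⟩
  refine hclose _ (gridScale_vertex_mem_Icc σ k) _ (gridScale_vertex_mem_Icc σ l) ?_
  calc dist (gridScale (M + 1) (σ.vertex k)) (gridScale (M + 1) (σ.vertex l))
      ≤ 1 / (2 * (M + 1 : ℕ)) := dist_gridScale_vertex_le σ k l
    _ ≤ 1 / (M + 1) := by
      push_cast
      gcongr
      linarith
    _ < δ := hM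

theorem borsuk_ulam_pi {g : (Fin (n + 1) → ℝ) → Fin n → ℝ}
    (hodd : ∀ v ≠ 0, g (-v) = -g v) (hcont : ContinuousOn g {0}ᶜ) : ∃ v ≠ 0, g v = 0 := by
  have hcomp : Continuous fun t ↦ ‖g (hemisphere n t)‖ :=
    (hcont.comp_continuous (continuous_hemisphere n) hemisphere_ne_zero).norm
  obtain ⟨t, -, hmin⟩ := isCompact_Icc.exists_isMinOn
    (Set.nonempty_Icc.2 (zero_le_one' (Fin n → ℝ))) hcomp.continuousOn
  refine ⟨hemisphere n t, hemisphere_ne_zero t, ?_⟩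
  by_contra hne
  obtain ⟨t', ht', hlt⟩ := exists_norm_hemisphere_lt hodd hcont (norm_pos_iff.2 hne)
  exact hlt.not_ge (hmin ht')

theorem borsuk_ulam {V ι : Type*} [AddCommGroup V] [Module ℝ V] [TopologicalSpace V]
    [ContinuousAdd V] [ContinuousSMul ℝ V] [Fintype ι] (hdim : Fintype.card ι < Module.finrank ℝ V)
    {g : V → ι → ℝ} (hodd : ∀ v ≠ 0, g (-v) = -g v) (hcont : ContinuousOn g {0}ᶜ) :
    ∃ v ≠ 0, g v = 0 := by
  obtain ⟨w, hw⟩ := exists_linearIndependent_of_le_finrank (Nat.succ_le_of_lt hdim)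
  let L := Fintype.linearCombination ℝ w
  have L_ne_zero {x} (hx : x ≠ 0) : L x ≠ 0 :=
    (map_ne_zero_iff L hw.fintypeLinearCombination_injective).2 hx
  let e := Fintype.equivFin ι
  obtain ⟨x, hx, hgx⟩ := borsuk_ulam_pi (g := fun x ↦ g (L x) ∘ e.symm)
    (fun x hx ↦ by rw [map_neg, hodd _ (L_ne_zero hx)]; rfl)
    (continuousOn_pi.2 fun j ↦ (continuous_apply (e.symm j)).comp_continuousOn
      (hcont.comp L.continuous_on_pi.continuousOn fun x hx ↦ L_ne_zero hx))
  refine ⟨L x, L_ne_zero hx, funext fun i ↦ ?_⟩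
  simpa using congrFun hgx (e i)

end BorsukUlam

section HamSandwich

variable {V X ι : Type*} [MeasurableSpace X]

lemma continuousAt_measureReal_setOf_pos [TopologicalSpace V] [FirstCountableTopology V]
    {μ : Measure X} [IsFiniteMeasure μ] {f : V → X → ℝ} (hmeas : ∀ v, Measurable (f v))
    (hcont : ∀ x, Continuous (f · x)) {v : V} (hnull : ∀ᵐ x ∂μ, f v x ≠ 0) :
    ContinuousAt (fun w ↦ μ.real {x | 0 < f w x}) v := by
  have hpos (w : V) : MeasurableSet {x | 0 < f w x} := measurableSet_lt measurable_const (hmeas w)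
  refine (ENNReal.tendsto_toReal (measure_ne_top _ _)).comp
    (tendsto_measure_of_ae_tendsto_indicator_of_isFiniteMeasure _ (hpos v) hpos ?_)
  filter_upwards [hnull] with x hx
  have hcontx := (hcont x).continuousAt (x := v)
  rcases hx.lt_or_gt with hneg | hpos
  · filter_upwards [hcontx.eventually_lt_const hneg] with w hw
    exact iff_of_false hw.not_gt hneg.not_gt
  · filter_upwards [hcontx.eventually_const_lt hpos] with w hw
    exact iff_of_true hw hpos

lemma measure_setOf_nonneg_eq_nonpos {μ : Measure X} [IsFiniteMeasure μ] {f : X → ℝ}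
    (hnull : ∀ᵐ x ∂μ, f x ≠ 0) (hreal : μ.real {x | 0 < f x} = μ.real {x | f x < 0}) :
    μ {x | 0 ≤ f x} = μ {x | f x ≤ 0} := by
  have hpos : {x | 0 ≤ f x} =ᵐ[μ] {x | 0 < f x} := by
    filter_upwards [hnull] with x hx
    exact propext hx.symm.le_iff_lt
  have hneg : {x | f x ≤ 0} =ᵐ[μ] {x | f x < 0} := by
    filter_upwards [hnull] with x hx
    exact propext hx.le_iff_lt
  rw [measure_congr hpos, measure_congr hneg]
  exact (measureReal_eq_measureReal_iff).1 hreal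

theorem exists_ne_zero_forall_measure_nonneg_eq_nonpos [AddCommGroup V] [Module ℝ V]
    [TopologicalSpace V] [IsTopologicalAddGroup V] [ContinuousSMul ℝ V] [FirstCountableTopology V]
    [Fintype ι] (hdim : Fintype.card ι < Module.finrank ℝ V)
    (μ : ι → Measure X) [∀ i, IsFiniteMeasure (μ i)] {f : V → X → ℝ}
    (hodd : ∀ v, f (-v) = -f v) (hmeas : ∀ v, Measurable (f v)) (hcont : ∀ x, Continuous (f · x))
    (hnull : ∀ v ≠ 0, ∀ i, ∀ᵐ x ∂μ i, f v x ≠ 0) :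
    ∃ v ≠ 0, ∀ i, μ i {x | 0 ≤ f v x} = μ i {x | f v x ≤ 0} := by
  obtain ⟨v, hv, hbal⟩ := borsuk_ulam hdim
    (g := fun v i ↦ (μ i).real {x | 0 < f v x} - (μ i).real {x | 0 < f (-v) x})
    (fun v _ ↦ by funext i; simp) <| continuousOn_pi.2 fun i v hv ↦ by
      have hcont_pos (w : V) (hw : w ≠ 0) :=
        continuousAt_measureReal_setOf_pos hmeas hcont (hnull w hw i)
      exact ((hcont_pos v hv).sub <| (hcont_pos (-v) (neg_ne_zero.2 hv)).comp
        (f := Neg.neg) continuous_neg.continuousAt).continuousWithinAt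
  refine ⟨v, hv, fun i ↦ measure_setOf_nonneg_eq_nonpos (hnull v hv i) ?_⟩
  simpa [sub_eq_zero, hodd] using congrFun hbal i

end HamSandwich

section Spheres

variable {E : Type*} [NormedAddCommGroup E] [InnerProductSpace ℝ E]

lemma setOf_quadratic_eq_zero_subset_sphere {a : ℝ} (ha : a ≠ 0) (b : E) (c : ℝ) :
    {x : E | a * ‖x‖ ^ 2 + ⟪b, x⟫ + c = 0} ⊆
      Metric.sphere (-((2 * a)⁻¹ • b)) √(‖(2 * a)⁻¹ • b‖ ^ 2 - c / a) := by
  intro x (hx : a * ‖x‖ ^ 2 + ⟪b, x⟫ + c = 0)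
  have complete_square : ‖x + (2 * a)⁻¹ • b‖ ^ 2 = ‖(2 * a)⁻¹ • b‖ ^ 2 - c / a := by
    rw [norm_add_sq_real, inner_smul_right, real_inner_comm]
    field_simp
    linear_combination hx
  rw [mem_sphere_iff_norm, sub_neg_eq_add, ← complete_square, Real.sqrt_sq (norm_nonneg _)]

lemma exists_affineSubspace_ne_top_setOf_inner_add_eq_zero_subset {b : E} {c : ℝ}
    (h : ¬(b = 0 ∧ c = 0)) :
    ∃ s : AffineSubspace ℝ E, s ≠ ⊤ ∧ {x : E | ⟪b, x⟫ + c = 0} ⊆ s := by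
  by_cases hempty : {x : E | ⟪b, x⟫ + c = 0} = ∅
  · exact ⟨⊥, bot_ne_top, by simp [hempty]⟩
  obtain ⟨x₀, hx₀ : ⟪b, x₀⟫ + c = 0⟩ := Set.nonempty_iff_ne_empty.2 hempty
  have hb : b ≠ 0 := by
    rintro rfl
    exact h ⟨rfl, by simpa using hx₀⟩
  refine ⟨AffineSubspace.mk' x₀ (LinearMap.ker (innerₛₗ ℝ b)), fun htop ↦ hb ?_, fun x hx ↦ ?_⟩
  · have hmem : b +ᵥ x₀ ∈ AffineSubspace.mk' x₀ (LinearMap.ker (innerₛₗ ℝ b)) :=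
      htop ▸ AffineSubspace.mem_top ℝ E _
    simpa using hmem
  · have hx' : ⟪b, x⟫ + c = 0 := hx
    simp only [SetLike.mem_coe, AffineSubspace.mem_mk', vsub_eq_sub, LinearMap.mem_ker, map_sub,
      innerₛₗ_apply_apply]
    linarith

lemma ae_quadratic_ne_zero [MeasurableSpace E] {μ : Measure E}
    (hsphere : ∀ x r, μ (Metric.sphere x r) = 0)
    (hplane : ∀ s : AffineSubspace ℝ E, s ≠ ⊤ → μ s = 0) {a c : ℝ} {b : E}
    (h : ¬(a = 0 ∧ b = 0 ∧ c = 0)) : ∀ᵐ x ∂μ, a * ‖x‖ ^ 2 + ⟪b, x⟫ + c ≠ 0 := by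
  refine measure_eq_zero_iff_ae_notMem.1 (?_ : μ {x | a * ‖x‖ ^ 2 + ⟪b, x⟫ + c = 0} = 0)
  rcases eq_or_ne a 0 with rfl | ha
  · obtain ⟨s, hs, hsub⟩ := exists_affineSubspace_ne_top_setOf_inner_add_eq_zero_subset
      fun hbc ↦ h ⟨rfl, hbc⟩
    simpa using measure_mono_null hsub (hplane s hs)
  · exact measure_mono_null (setOf_quadratic_eq_zero_subset_sphere ha b c) (hsphere _ _)

theorem sphere_halving_general [FiniteDimensional ℝ E] [MeasurableSpace E] [OpensMeasurableSpace E]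
    {ι : Type*} [Fintype ι] (hι : Fintype.card ι ≤ Module.finrank ℝ E + 1)
    (μ : ι → Measure E) [∀ i, IsFiniteMeasure (μ i)]
    (hsphere : ∀ i x r, μ i (Metric.sphere x r) = 0)
    (hplane : ∀ i (s : AffineSubspace ℝ E), s ≠ ⊤ → μ i s = 0) :
    ∃ (a c : ℝ) (b : E), ¬(a = 0 ∧ b = 0 ∧ c = 0) ∧
      ∀ i, μ i {x | 0 ≤ a * ‖x‖ ^ 2 + ⟪b, x⟫ + c} = μ i {x | a * ‖x‖ ^ 2 + ⟪b, x⟫ + c ≤ 0} := by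
  have hdim : Fintype.card ι < Module.finrank ℝ (ℝ × E × ℝ) := by
    simp only [Module.finrank_prod, Module.finrank_self]
    omega
  obtain ⟨⟨a, b, c⟩, hne, hhalf⟩ := exists_ne_zero_forall_measure_nonneg_eq_nonpos hdim μ
    (f := fun v x ↦ v.1 * ‖x‖ ^ 2 + ⟪v.2.1, x⟫ + v.2.2)
    (fun v ↦ by
      funext x
      simp only [Prod.fst_neg, Prod.snd_neg, inner_neg_left, Pi.neg_apply]
      ring)
    (fun v ↦ Continuous.measurable (by fun_prop)) (fun x ↦ by fun_prop)
    (fun v hv i ↦ ae_quadratic_ne_zero (hsphere i) (hplane i) (by simpa [Prod.ext_iff] using hv))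
  exact ⟨a, c, b, by simpa [Prod.ext_iff] using hne, hhalf⟩

end Spheres

/-- Stone–Tukey corollary: `d+1` measures in `ℝ^d` can be simultaneously
halved by a sphere (or hyperplane, in the degenerate case `a = 0`). -/
theorem sphere_halving (d : ℕ) (hd : 0 < d)
    (μ : Fin (d + 1) → Measure (EuclideanSpace ℝ (Fin d)))
    (hfin : ∀ i, IsFiniteMeasure (μ i))
    (hac : ∀ i, μ i ≪ volume) :
    ∃ (a c : ℝ) (b : EuclideanSpace ℝ (Fin d)),
      ¬(a = 0 ∧ b = 0 ∧ c = 0) ∧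
      ∀ i, μ i {x | 0 ≤ a * ‖x‖ ^ 2 + ⟪b, x⟫ + c}
          = μ i {x | a * ‖x‖ ^ 2 + ⟪b, x⟫ + c ≤ 0} := by
  have : Nonempty (Fin d) := ⟨⟨0, hd⟩⟩
  exact sphere_halving_general (by simp) μ (fun i x r ↦ hac i (Measure.addHaar_sphere volume x r))
    fun i s hs ↦ hac i (Measure.addHaar_affineSubspace volume s hs)
end

section
/- Let n be an odd positive integer. Then there is no family T₁, …, T_n of n triangles in ℝ² such that the T_j have pairwise disjoint interiors, their union is the unit square [0,1] × [0,1], and all T_j have the same area; equivalently, the unit square cannot be partitioned into an odd number of triangles of equal area. -/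
open MeasureTheory

/-!
Extend the 2-adic valuation to a valuation `v` on `ℝ`, and colour a point `(x, y)` of the plane
according to which of `1`, `x`, `y` has the largest valuation. A triangle whose vertices have three
different colours has doubled area of valuation at least `1`; in particular no line meets all three
colours, so the parity of the number of segments with endpoint colours `0` and `1` is additive
along lines.

Superimpose two dissections of the same region. Off the boundary lines every point is covered an
even number of times, so crossing a side at a generic point shows that almost every point lies on
an even number of sides. Restricting to one line at a time, the total parity of the `0`-`1` sides
vanishes: it is therefore the same for both dissections. Comparing with the square cut along its
antidiagonal, it is odd, so every dissection of the square has a three-coloured triangle. If the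
`n` triangles have equal area, then `n * |d| = 2` for the doubled area `d` of this triangle, and
for `n` odd this forces `v d < 1`.
-/

namespace Monsky

open Filter Module Set Topology

section LinearOrder

variable {κ α R : Type*} [LinearOrder α] [TopologicalSpace α] [OrderTopology α]

theorem eventually_nhdsGT_indicator_Iio [Zero R] [One R] (a c : α) :
    ∀ᶠ t in 𝓝[>] a, (Iio c).indicator (1 : α → R) t = if a < c then 1 else 0 := by
  split_ifs with hac
  · filter_upwards [mem_nhdsWithin_of_mem_nhds (Iio_mem_nhds hac)] with t ht
    exact indicator_of_mem ht 1
  · filter_upwards [self_mem_nhdsWithin] with t ht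
    exact indicator_of_notMem (fun htc => hac (lt_trans ht htc)) 1

theorem eventually_nhdsLT_indicator_Iio [Zero R] [One R] (a c : α) :
    ∀ᶠ t in 𝓝[<] a, (Iio c).indicator (1 : α → R) t = if a ≤ c then 1 else 0 := by
  split_ifs with hac
  · filter_upwards [self_mem_nhdsWithin] with t ht
    exact indicator_of_mem (lt_of_lt_of_le ht hac) 1
  · filter_upwards [mem_nhdsWithin_of_mem_nhds (Ioi_mem_nhds (not_le.1 hac))] with t ht
    exact indicator_of_notMem (lt_asymm ht) 1

variable [DenselyOrdered α] [NoMinOrder α] [NoMaxOrder α] [Ring R] {s : Finset κ} {c : κ → α}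

-- The number of `k` with `t < c k` drops by the size of the fibre over `a` as `t` passes `a`.
theorem card_fiber_cast_eq_zero
    (h : ∀ᶠ t in cofinite, ∑ k ∈ s, (Iio (c k)).indicator (1 : α → R) t = 0) (a : α) :
    ({k ∈ s | c k = a}.card : R) = 0 := by
  have right_sum : ∑ k ∈ s, (if a < c k then 1 else 0 : R) = 0 := by
    have hs := (Finset.eventually_all s).2 fun k _ =>
      eventually_nhdsGT_indicator_Iio (R := R) a (c k)
    obtain ⟨t, ht, ht0⟩ :=
      (hs.and (h.filter_mono ((nhdsGT_le_nhdsNE a).trans (nhdsNE_le_cofinite a)))).exists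
    rwa [Finset.sum_congr rfl ht] at ht0
  have left_sum : ∑ k ∈ s, (if a ≤ c k then 1 else 0 : R) = 0 := by
    have hs := (Finset.eventually_all s).2 fun k _ =>
      eventually_nhdsLT_indicator_Iio (R := R) a (c k)
    obtain ⟨t, ht, ht0⟩ :=
      (hs.and (h.filter_mono ((nhdsLT_le_nhdsNE a).trans (nhdsNE_le_cofinite a)))).exists
    rwa [Finset.sum_congr rfl ht] at ht0
  calc ({k ∈ s | c k = a}.card : R)
    _ = ∑ k ∈ s, ((if a ≤ c k then 1 else 0) - if a < c k then 1 else 0) := ?_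
    _ = 0 := by rw [Finset.sum_sub_distrib, left_sum, right_sum, sub_zero]
  rw [Finset.natCast_card_filter]
  refine Finset.sum_congr rfl fun k _ => ?_
  rcases lt_trichotomy a (c k) with hk | hk | hk
  · simp [hk, hk.le, hk.ne']
  · simp [hk]
  · simp [hk.not_ge, hk.not_gt, hk.ne]

theorem sum_comp_eq_zero_of_sum_indicator_Iio_eq_zero
    (h : ∀ᶠ t in cofinite, ∑ k ∈ s, (Iio (c k)).indicator (1 : α → R) t = 0) (g : α → R) :
    ∑ k ∈ s, g (c k) = 0 := by
  rw [Finset.sum_comp]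
  refine Finset.sum_eq_zero fun a _ => ?_
  rw [nsmul_eq_mul, card_fiber_cast_eq_zero h, zero_mul]

end LinearOrder

section Segments

variable {κ : Type*} {a b : κ → ℝ} {s : Finset κ}

theorem indicator_openSegment_eq_add {a b t : ℝ} (ha : t ≠ a) (hb : t ≠ b) :
    (openSegment ℝ a b).indicator (1 : ℝ → ZMod 2) t =
      (Iio a).indicator 1 t + (Iio b).indicator 1 t := by
  wlog hab : a ≤ b generalizing a b
  · rw [openSegment_symm, add_comm, this hb ha (le_of_not_ge hab)]
  rcases hab.eq_or_lt with rfl | hab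
  · rw [openSegment_same, indicator_of_notMem (notMem_singleton_iff.2 ha), CharTwo.add_self_eq_zero]
  · rw [openSegment_eq_Ioo hab]
    rcases ha.lt_or_gt with hta | hta
    · rw [indicator_of_notMem fun h => hta.not_gt h.1, indicator_of_mem (mem_Iio.2 hta),
        indicator_of_mem (mem_Iio.2 (hta.trans hab)), CharTwo.add_self_eq_zero]
    · rw [indicator_of_notMem (notMem_Iio.2 hta.le), zero_add]
      exact indicator_eq_indicator (by simp [hta]) rfl

theorem sum_endpoints_eq_zero
    (h : ∀ᶠ t in cofinite, ∑ e ∈ s, (openSegment ℝ (a e) (b e)).indicator (1 : ℝ → ZMod 2) t = 0)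
    (g : ℝ → ZMod 2) : ∑ e ∈ s, (g (a e) + g (b e)) = 0 := by
  have avoids (c : κ → ℝ) : ∀ᶠ t in cofinite, ∀ e ∈ s, t ≠ c e :=
    (Finset.eventually_all s).2 fun e _ => (finite_singleton (c e)).compl_mem_cofinite
  have endpoints := sum_comp_eq_zero_of_sum_indicator_Iio_eq_zero (R := ZMod 2)
    (s := s.disjSum s) (c := Sum.elim a b) ?_ g
  · simpa [Finset.sum_disjSum, Finset.sum_add_distrib] using endpoints
  · filter_upwards [h, avoids a, avoids b] with t ht hta htb
    rw [Finset.sum_disjSum, ← Finset.sum_add_distrib, ← ht]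
    exact Finset.sum_congr rfl fun e he =>
      (indicator_openSegment_eq_add (hta e he) (htb e he)).symm

variable {E : Type*} [AddCommGroup E] [Module ℝ E]

/-- A mod-2 function on segments `pq` that is additive under concatenating segments of a common
line. -/
def IsAdditiveOnLines (f : E → E → ZMod 2) : Prop :=
  ∀ ⦃p q r : E⦄, Collinear ℝ {p, q, r} → f p q = f p r + f q r

variable {f : E → E → ZMod 2}

theorem IsAdditiveOnLines.sum_comp_affineMap_eq_zero (hf : IsAdditiveOnLines f) (γ : ℝ →ᵃ[ℝ] E)
    (h : ∀ᶠ t in cofinite, ∑ e ∈ s, (openSegment ℝ (a e) (b e)).indicator (1 : ℝ → ZMod 2) t = 0) :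
    ∑ e ∈ s, f (γ (a e)) (γ (b e)) = 0 := by
  rw [← sum_endpoints_eq_zero h fun t => f (γ t) (γ 0)]
  refine Finset.sum_congr rfl fun e _ => hf ?_
  refine (collinear_iff_exists_forall_eq_smul_vadd _).2 ⟨γ 0, γ.linear 1, ?_⟩
  have on_line (t : ℝ) : ∃ r : ℝ, γ t = r • γ.linear 1 +ᵥ γ 0 :=
    ⟨t, by rw [← map_smul, ← γ.map_vadd]; simp⟩
  rintro x (rfl | rfl | rfl) <;> exact on_line _

variable {A B : κ → E} {p q : E}

theorem subsingleton_lineMap_preimage_openSegment {A B : E} (hpq : p ≠ q)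
    (h : line[ℝ, A, B] ≠ line[ℝ, p, q]) :
    (AffineMap.lineMap (k := ℝ) p q ⁻¹' openSegment ℝ A B).Subsingleton := by
  have mem_line {x : E} (hx : x ∈ openSegment ℝ A B) : x ∈ line[ℝ, A, B] := by
    rw [openSegment_eq_image_lineMap] at hx
    obtain ⟨r, -, rfl⟩ := hx
    exact AffineMap.lineMap_mem_affineSpan_pair r A B
  intro t ht u hu
  by_contra htu
  have hne := (AffineMap.lineMap_injective ℝ hpq).ne htu
  exact h ((affineSpan_pair_eq_of_mem_of_mem_of_ne (mem_line ht) (mem_line hu) hne).symm.trans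
    (affineSpan_pair_eq_of_mem_of_mem_of_ne (AffineMap.lineMap_mem_affineSpan_pair t p q)
      (AffineMap.lineMap_mem_affineSpan_pair u p q) hne))

open Classical in
theorem IsAdditiveOnLines.sum_line_eq_zero [Fintype κ] (hf : IsAdditiveOnLines f)
    (h : ∀ᶠ x in cofinite, ∑ e, (openSegment ℝ (A e) (B e)).indicator (1 : E → ZMod 2) x = 0)
    (hpq : p ≠ q) :
    ∑ e with line[ℝ, A e, B e] = line[ℝ, p, q], f (A e) (B e) = 0 := by
  set γ : ℝ →ᵃ[ℝ] E := AffineMap.lineMap p q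
  have γ_inj : Function.Injective γ := AffineMap.lineMap_injective ℝ hpq
  set γ_inv : E → ℝ := Function.invFun γ
  have γ_apply_γ_inv {x : E} (hx : x ∈ line[ℝ, p, q]) : γ (γ_inv x) = x :=
    Function.invFun_eq (mem_affineSpan_pair_iff_exists_lineMap_eq.1 hx)
  have endpoints (e : κ) (he : line[ℝ, A e, B e] = line[ℝ, p, q]) :
      γ (γ_inv (A e)) = A e ∧ γ (γ_inv (B e)) = B e :=
    ⟨γ_apply_γ_inv (he ▸ left_mem_affineSpan_pair ℝ _ _),
      γ_apply_γ_inv (he ▸ right_mem_affineSpan_pair ℝ _ _)⟩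
  have transverse : ∀ᶠ t in cofinite, ∀ e, line[ℝ, A e, B e] ≠ line[ℝ, p, q] →
      γ t ∉ openSegment ℝ (A e) (B e) :=
    eventually_all.2 fun e => eventually_imp_distrib_left.2 fun he =>
      (subsingleton_lineMap_preimage_openSegment hpq he).finite.compl_mem_cofinite
  rw [← hf.sum_comp_affineMap_eq_zero γ
    (s := {e | line[ℝ, A e, B e] = line[ℝ, p, q]}) (a := γ_inv ∘ A) (b := γ_inv ∘ B)]
  · refine Finset.sum_congr rfl fun e he => ?_
    obtain ⟨hA, hB⟩ := endpoints e (Finset.mem_filter.1 he).2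
    rw [Function.comp_apply, Function.comp_apply, hA, hB]
  · filter_upwards [γ_inj.tendsto_cofinite.eventually h, transverse] with t ht htr
    rw [← ht, Finset.sum_filter]
    refine Finset.sum_congr rfl fun e _ => ?_
    split_ifs with he
    · obtain ⟨hA, hB⟩ := endpoints e he
      rw [← hA, ← hB, ← image_openSegment]
      exact indicator_eq_indicator γ_inj.mem_set_image.symm rfl
    · exact (indicator_of_notMem (htr e he) 1).symm

theorem IsAdditiveOnLines.sum_segments_eq_zero [Fintype κ] (hf : IsAdditiveOnLines f)
    (hAB : ∀ e, A e ≠ B e)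
    (h : ∀ᶠ x in cofinite, ∑ e, (openSegment ℝ (A e) (B e)).indicator (1 : E → ZMod 2) x = 0) :
    ∑ e, f (A e) (B e) = 0 := by
  classical
  rw [← Finset.sum_fiberwise_of_maps_to (t := Finset.univ.image fun e => line[ℝ, A e, B e])
    fun e he => Finset.mem_image_of_mem _ he]
  refine Finset.sum_eq_zero fun ℓ hℓ => ?_
  obtain ⟨e, -, rfl⟩ := Finset.mem_image.1 hℓ
  exact hf.sum_line_eq_zero h (hAB e)

end Segments

section Facets

variable {ι E : Type*} [AddCommGroup E] [Module ℝ E] {b : AffineBasis ι ℝ E} {v : E}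

/-- The relative interior of the facet opposite the vertex `b k` of the simplex spanned by `b`. -/
def openFacet (b : AffineBasis ι ℝ E) (k : ι) : Set E :=
  {x | b.coord k x = 0 ∧ ∀ j ≠ k, 0 < b.coord j x}

theorem eventually_nhdsGT_add_mul_pos_iff (a c : ℝ) :
    ∀ᶠ ε in 𝓝[>] (0 : ℝ), 0 < a + ε * c ↔ 0 < a ∨ a = 0 ∧ 0 < c := by
  have near : Tendsto (fun ε : ℝ => a + ε * c) (𝓝[>] 0) (𝓝 a) :=
    (Continuous.tendsto' (by fun_prop) 0 a (by simp)).mono_left nhdsWithin_le_nhds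
  rcases lt_trichotomy a 0 with ha | rfl | ha
  · filter_upwards [near.eventually_lt_const ha] with ε hε
    simp [hε.not_gt, ha.not_gt, ha.ne]
  · filter_upwards [self_mem_nhdsWithin] with ε hε
    simp [mul_pos_iff_of_pos_left (mem_Ioi.1 hε)]
  · filter_upwards [near.eventually_const_lt ha] with ε hε
    simp [hε, ha]

theorem eventually_nhdsGT_add_mul_ne_zero (a : ℝ) {c : ℝ} (hc : c ≠ 0) :
    ∀ᶠ ε in 𝓝[>] (0 : ℝ), a + ε * c ≠ 0 := by
  filter_upwards [(nhdsGT_le_nhdsNE 0).trans (nhdsNE_le_cofinite 0)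
    (finite_singleton (-a / c)).compl_mem_cofinite] with ε hε h
  exact hε (by rw [mem_singleton_iff]; field_simp; linear_combination h)

theorem coord_add_smul (b : AffineBasis ι ℝ E) (k : ι) (x v : E) (ε : ℝ) :
    b.coord k (x + ε • v) = b.coord k x + ε * (b.coord k).linear v := by
  rw [add_comm x, ← vadd_eq_add, AffineMap.map_vadd, map_smul, vadd_eq_add, smul_eq_mul, add_comm]

theorem eventually_coord_add_smul_ne_zero {k : ι} (x : E) (hv : (b.coord k).linear v ≠ 0) :
    ∀ᶠ ε in 𝓝[>] (0 : ℝ), b.coord k (x + ε • v) ≠ 0 := by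
  simpa only [coord_add_smul] using eventually_nhdsGT_add_mul_ne_zero (b.coord k x) hv

theorem exists_coord_linear_ne_zero [Nontrivial ι] (b : AffineBasis ι ℝ E) (k : ι) :
    ∃ v, (b.coord k).linear v ≠ 0 := by
  obtain ⟨j, hj⟩ := exists_ne k
  refine ⟨b k -ᵥ b j, ?_⟩
  rw [AffineMap.linearMap_vsub, b.coord_apply_eq, b.coord_apply_ne hj.symm]
  simp

end Facets

section FacetCrossing

variable {ι κ E : Type*} [NormedAddCommGroup E] [NormedSpace ℝ E] {b : AffineBasis ι ℝ E} {x v : E}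

theorem eventually_mem_interior_convexHull_iff [Finite ι] (b : AffineBasis ι ℝ E) (x v : E) :
    ∀ᶠ ε in 𝓝[>] (0 : ℝ), x + ε • v ∈ interior (convexHull ℝ (range b)) ↔
      ∀ k, 0 < b.coord k x ∨ b.coord k x = 0 ∧ 0 < (b.coord k).linear v := by
  filter_upwards [eventually_all.2 fun k =>
    eventually_nhdsGT_add_mul_pos_iff (b.coord k x) ((b.coord k).linear v)] with ε hε
  rw [b.interior_convexHull, mem_ofPred_eq]
  exact forall_congr' fun k => by rw [coord_add_smul, hε k]

open Classical in
theorem eventually_indicator_interior_of_coord_eq_zero [Finite ι] {k : ι} (hk : b.coord k x = 0)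
    (hx : ∀ j ≠ k, b.coord j x ≠ 0) :
    ∀ᶠ ε in 𝓝[>] (0 : ℝ), (interior (convexHull ℝ (range b))).indicator (1 : E → ZMod 2) (x + ε • v)
      = if 0 < (b.coord k).linear v then (openFacet b k).indicator 1 x else 0 := by
  filter_upwards [eventually_mem_interior_convexHull_iff b x v] with ε hε
  have : x + ε • v ∈ interior (convexHull ℝ (range b)) ↔
      0 < (b.coord k).linear v ∧ x ∈ openFacet b k := by
    rw [hε]
    refine ⟨fun h => ⟨?_, hk, fun j hj => ?_⟩, fun h j => ?_⟩
    · exact ((h k).resolve_left hk.not_gt).2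
    · exact (h j).resolve_right fun h0 => hx j hj h0.1
    · rcases eq_or_ne j k with rfl | hj
      · exact .inr ⟨hk, h.1⟩
      · exact .inl (h.2.2 j hj)
  simp only [indicator_apply, this, ite_and, Pi.one_apply]

variable [Fintype ι]

-- Moving off an open facet in a generic direction, exactly one of the two sides is inside.
theorem eventually_indicator_interior_add_indicator_interior
    (hx : {k | b.coord k x = 0}.Subsingleton) (hv : ∀ k, (b.coord k).linear v ≠ 0) :
    ∀ᶠ ε in 𝓝[>] (0 : ℝ),
      (interior (convexHull ℝ (range b))).indicator (1 : E → ZMod 2) (x + ε • v) +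
        (interior (convexHull ℝ (range b))).indicator (1 : E → ZMod 2) (x + ε • -v) =
      ∑ k, (openFacet b k).indicator 1 x := by
  classical
  by_cases hzero : ∃ k, b.coord k x = 0
  · obtain ⟨k, hk⟩ := hzero
    have hk' (j) (hj : j ≠ k) : b.coord j x ≠ 0 := fun h => hj (hx h hk)
    have only_k : ∑ j, (openFacet b j).indicator (1 : E → ZMod 2) x =
        (openFacet b k).indicator 1 x :=
      Finset.sum_eq_single k (fun j _ hj => indicator_of_notMem (fun h => hk' j hj h.1) 1) (by simp)
    filter_upwards [eventually_indicator_interior_of_coord_eq_zero (v := v) hk hk',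
      eventually_indicator_interior_of_coord_eq_zero (v := -v) hk hk'] with ε hpos hneg
    rw [hpos, hneg, only_k, map_neg]
    rcases (hv k).lt_or_gt with h | h
    · rw [if_neg h.not_gt, if_pos (neg_pos.2 h), zero_add]
    · rw [if_pos h, if_neg (neg_neg_iff_pos.2 h).not_gt, add_zero]
  · push Not at hzero
    filter_upwards [eventually_mem_interior_convexHull_iff b x v,
      eventually_mem_interior_convexHull_iff b x (-v)] with ε hpos hneg
    rw [Finset.sum_eq_zero fun k _ => indicator_of_notMem (fun h => hzero k h.1) 1]
    simp only [indicator_apply, hpos, hneg, hzero, false_and, or_false, Pi.one_apply,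
      CharTwo.add_self_eq_zero]

variable [Fintype κ] {T : κ → AffineBasis ι ℝ E}

/-- Every point off the facet hyperplanes of the simplices `T i` lies in an even number of them. -/
def CoversEvenly (T : κ → AffineBasis ι ℝ E) : Prop :=
  ∀ x, (∀ i k, (T i).coord k x ≠ 0) →
    ∑ i, (interior (convexHull ℝ (range (T i)))).indicator (1 : E → ZMod 2) x = 0

theorem CoversEvenly.sum_indicator_openFacet_eq_zero [Nontrivial ι] (hT : CoversEvenly T)
    (hx : ∀ i, {k | (T i).coord k x = 0}.Subsingleton) :
    ∑ i, ∑ k, (openFacet (T i) k).indicator (1 : E → ZMod 2) x = 0 := by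
  obtain ⟨v, hv⟩ := Dual.exists_forall_ne_zero_of_forall_exists
    (fun ik : κ × ι => ((T ik.1).coord ik.2).linear) fun ik => exists_coord_linear_ne_zero _ _
  have covered (w : E) (hw : ∀ i k, ((T i).coord k).linear w ≠ 0) : ∀ᶠ ε in 𝓝[>] (0 : ℝ),
      ∑ i, (interior (convexHull ℝ (range (T i)))).indicator (1 : E → ZMod 2) (x + ε • w) = 0 := by
    filter_upwards [eventually_all.2 fun i => eventually_all.2 fun k =>
      eventually_coord_add_smul_ne_zero x (hw i k)] with ε hε
    exact hT _ hε
  obtain ⟨ε, hcross, hpos, hneg⟩ := ((eventually_all.2 fun i =>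
    eventually_indicator_interior_add_indicator_interior (hx i) fun k => hv (i, k)).and
    ((covered v fun i k => hv (i, k)).and
      (covered (-v) fun i k => by simpa only [map_neg, neg_ne_zero] using hv (i, k)))).exists
  rw [← Finset.sum_congr rfl fun i _ => hcross i, Finset.sum_add_distrib, hpos, hneg, add_zero]

end FacetCrossing

section Triangles

theorem sum_fin_three_eq_add_add {M : Type*} [AddCommMonoid M] (g : Fin 3 → M) (k : Fin 3) :
    ∑ j, g j = g k + (g (k + 1) + g (k + 2)) := by
  rw [← Equiv.sum_comp (Equiv.addLeft k), Fin.sum_univ_three, add_assoc]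
  simp

variable {E : Type*} [AddCommGroup E] [Module ℝ E] {b : AffineBasis (Fin 3) ℝ E}

theorem openFacet_eq_openSegment (b : AffineBasis (Fin 3) ℝ E) (k : Fin 3) :
    openFacet b k = openSegment ℝ (b (k + 1)) (b (k + 2)) := by
  have ne_iff (j : Fin 3) : j ≠ k ↔ j = k + 1 ∨ j = k + 2 := by decide +revert
  ext x
  simp only [openFacet, ne_iff, forall_eq_or_imp, forall_eq, mem_ofPred_eq]
  constructor
  · rintro ⟨hk, hk₁, hk₂⟩
    refine ⟨_, _, hk₁, hk₂, ?_, ?_⟩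
    · simpa only [sum_fin_three_eq_add_add _ k, hk, zero_add] using b.sum_coord_apply_eq_one x
    · simpa only [sum_fin_three_eq_add_add _ k, hk, zero_smul, zero_add] using
        b.linear_combination_coord_eq_self x
  · rintro ⟨r, s, hr, hs, hrs, rfl⟩
    simp only [Convex.combo_affine_apply hrs, b.coord_apply]
    simp [hr, hs]

theorem subsingleton_coord_eq_zero {x : E} (hx : x ∉ range b) :
    {k | b.coord k x = 0}.Subsingleton := by
  intro j hj k hk
  by_contra hjk
  have third : ∀ j k : Fin 3, j ≠ k → ∃ m, ∀ l ≠ m, l = j ∨ l = k := by decide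
  obtain ⟨m, hm⟩ := third j k hjk
  have vanish (l : Fin 3) (hl : l ≠ m) : b.coord l x = 0 := by
    rcases hm l hl with rfl | rfl
    exacts [hj, hk]
  have coord_m : b.coord m x = 1 := by
    rw [← b.sum_coord_apply_eq_one x, Finset.sum_eq_single m (fun l _ => vanish l) (by simp)]
  refine hx ⟨m, b.ext_elem fun l => ?_⟩
  rcases eq_or_ne l m with rfl | hl
  · rw [b.coord_apply_eq, coord_m]
  · rw [b.coord_apply_ne hl, vanish l hl]

/-- The sum of a mod-2 function of segments over the sides of the triangle `p`, the side opposite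
`p k` running from `p (k + 1)` to `p (k + 2)`. -/
def boundarySum {P : Type*} (f : P → P → ZMod 2) (p : Fin 3 → P) : ZMod 2 :=
  ∑ k, f (p (k + 1)) (p (k + 2))

theorem CoversEvenly.sum_boundarySum_eq_zero {κ E : Type*} [Fintype κ] [NormedAddCommGroup E]
    [NormedSpace ℝ E] {T : κ → AffineBasis (Fin 3) ℝ E} {f : E → E → ZMod 2}
    (hT : CoversEvenly T) (hf : IsAdditiveOnLines f) : ∑ i, boundarySum f (T i) = 0 := by
  simp only [boundarySum, ← Fintype.sum_prod_type']
  refine hf.sum_segments_eq_zero (fun e => (T e.1).ind.injective.ne (by simp)) ?_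
  have not_vertex : ∀ᶠ x in cofinite, ∀ i, x ∉ range (T i) :=
    eventually_all.2 fun i => (finite_range (T i)).compl_mem_cofinite
  filter_upwards [not_vertex] with x hx
  simpa only [openFacet_eq_openSegment, ← Fintype.sum_prod_type'] using
    hT.sum_indicator_openFacet_eq_zero fun i => subsingleton_coord_eq_zero (hx i)

end Triangles

section Dissections

variable {ι κ κ' E : Type*} [NormedAddCommGroup E] [NormedSpace ℝ E] [Fintype κ] [Fintype κ']
  {T : κ → AffineBasis ι ℝ E} {U : κ' → AffineBasis ι ℝ E} {S : Set E}

/-- The simplices `T i` have disjoint interiors and fill `S`; they need not meet face to face. -/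
structure IsDissection (T : κ → AffineBasis ι ℝ E) (S : Set E) : Prop where
  pairwise_disjoint : Pairwise fun i j =>
    Disjoint (interior (convexHull ℝ (range (T i)))) (interior (convexHull ℝ (range (T j))))
  iUnion_eq : ⋃ i, convexHull ℝ (range (T i)) = S

theorem IsDissection.sum_indicator_interior [Finite ι] {R : Type*} [AddCommMonoid R] [One R]
    (hT : IsDissection T S) {x : E} (hx : ∀ i k, (T i).coord k x ≠ 0) :
    ∑ i, (interior (convexHull ℝ (range (T i)))).indicator (1 : E → R) x = S.indicator 1 x := by
  have mem_interior {i} (hi : x ∈ convexHull ℝ (range (T i))) :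
      x ∈ interior (convexHull ℝ (range (T i))) := by
    rw [AffineBasis.convexHull_eq_nonneg_coord] at hi
    rw [AffineBasis.interior_convexHull]
    exact fun k => (hi k).lt_of_ne' (hx i k)
  rw [← hT.iUnion_eq]
  by_cases hxS : x ∈ ⋃ i, convexHull ℝ (range (T i))
  · obtain ⟨i, hi⟩ := mem_iUnion.1 hxS
    rw [indicator_of_mem hxS, Finset.sum_eq_single i, indicator_of_mem (mem_interior hi)]
    · exact fun j _ hj => indicator_of_notMem
        (fun h => disjoint_left.1 (hT.pairwise_disjoint hj) h (mem_interior hi)) 1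
    · simp
  · rw [indicator_of_notMem hxS]
    exact Finset.sum_eq_zero fun i _ =>
      indicator_of_notMem (fun h => hxS (mem_iUnion.2 ⟨i, interior_subset h⟩)) 1

theorem IsDissection.coversEvenly_sumElim [Finite ι] (hT : IsDissection T S)
    (hU : IsDissection U S) : CoversEvenly (Sum.elim T U) := by
  intro x hx
  rw [Fintype.sum_sum_type]
  exact (congr_arg₂ _ (hT.sum_indicator_interior fun i => hx (.inl i))
    (hU.sum_indicator_interior fun j => hx (.inr j))).trans (CharTwo.add_self_eq_zero _)

theorem IsDissection.sum_boundarySum_eq {T : κ → AffineBasis (Fin 3) ℝ E}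
    {U : κ' → AffineBasis (Fin 3) ℝ E} {f : E → E → ZMod 2} (hT : IsDissection T S)
    (hU : IsDissection U S) (hf : IsAdditiveOnLines f) :
    ∑ i, boundarySum f (T i) = ∑ j, boundarySum f (U j) := by
  have total := (hT.coversEvenly_sumElim hU).sum_boundarySum_eq_zero hf
  rwa [Fintype.sum_sum_type, CharTwo.add_eq_zero] at total

theorem IsDissection.measure_eq_sum [MeasurableSpace E] [BorelSpace E] [FiniteDimensional ℝ E]
    (μ : Measure E) [μ.IsAddHaarMeasure] (hT : IsDissection T S) :
    μ S = ∑ i, μ (convexHull ℝ (range (T i))) := by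
  have interior_ae_eq (i : κ) : interior (convexHull ℝ (range (T i))) =ᵐ[μ]
      convexHull ℝ (range (T i)) :=
    interior_ae_eq_of_null_frontier ((convex_convexHull ℝ _).addHaar_frontier μ)
  rw [← hT.iUnion_eq, measure_iUnion₀ _ fun i => (convex_convexHull ℝ _).nullMeasurableSet μ,
    tsum_fintype]
  exact fun i j hij => (hT.pairwise_disjoint hij).aedisjoint.congr
    (interior_ae_eq i).symm (interior_ae_eq j).symm

end Dissections

section Area

variable {K : Type*}

/-- Twice the signed area of the triangle with vertices `p 0`, `p 1`, `p 2`. -/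
def doubleArea [CommRing K] (p : Fin 3 → EuclideanSpace K (Fin 2)) : K :=
  Matrix.det (Matrix.of fun i => ![1, p i 0, p i 1])

theorem doubleArea_eq [CommRing K] (p : Fin 3 → EuclideanSpace K (Fin 2)) :
    doubleArea p =
      (p 1 0 - p 0 0) * (p 2 1 - p 0 1) - (p 1 1 - p 0 1) * (p 2 0 - p 0 0) := by
  simp only [doubleArea, Matrix.det_fin_three, Matrix.of_apply, Matrix.cons_val]
  ring

theorem doubleArea_comp_perm [CommRing K] (p : Fin 3 → EuclideanSpace K (Fin 2))
    (σ : Equiv.Perm (Fin 3)) : doubleArea (p ∘ σ) = Equiv.Perm.sign σ * doubleArea p :=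
  Matrix.det_permute σ (Matrix.of fun i => ![1, p i 0, p i 1])

theorem doubleArea_eq_zero_of_collinear [Field K] {p : Fin 3 → EuclideanSpace K (Fin 2)}
    (hp : Collinear K (range p)) : doubleArea p = 0 := by
  obtain ⟨c, u, h⟩ := (collinear_iff_exists_forall_eq_smul_vadd _).1 hp
  choose r hr using fun k => h (p k) (mem_range_self k)
  have coords (k : Fin 3) (i : Fin 2) : p k i = r k * u i + c i := by
    rw [hr]; rfl
  simp only [doubleArea_eq, coords]
  ring

end Area

section Colouring

variable {K Γ₀ : Type*} [CommRing K] [LinearOrderedCommGroupWithZero Γ₀] (v : Valuation K Γ₀)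

/-- Monsky's colouring of the plane: up to ties, the colour says which of `1`, `x`, `y` has the
largest valuation. -/
def colour (p : EuclideanSpace K (Fin 2)) : Fin 3 :=
  if v (p 0) < 1 ∧ v (p 1) < 1 then 0 else if v (p 1) ≤ v (p 0) then 1 else 2

variable {v}

theorem colour_eq_zero_iff {p : EuclideanSpace K (Fin 2)} :
    colour v p = 0 ↔ v (p 0) < 1 ∧ v (p 1) < 1 := by
  grind [colour]

theorem colour_eq_one_iff {p : EuclideanSpace K (Fin 2)} :
    colour v p = 1 ↔ 1 ≤ v (p 0) ∧ v (p 1) ≤ v (p 0) := by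
  grind [colour]

theorem colour_eq_two_iff {p : EuclideanSpace K (Fin 2)} :
    colour v p = 2 ↔ 1 ≤ v (p 1) ∧ v (p 0) < v (p 1) := by
  grind [colour]

-- Of the two products making up the determinant, the first has the strictly larger valuation.
theorem one_le_valuation_doubleArea_of_colour_eq {p : Fin 3 → EuclideanSpace K (Fin 2)}
    (hp : ∀ k, colour v (p k) = k) : 1 ≤ v (doubleArea p) := by
  obtain ⟨hx₀, hy₀⟩ := colour_eq_zero_iff.1 (hp 0)
  obtain ⟨hx₁, hy₁⟩ := colour_eq_one_iff.1 (hp 1)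
  obtain ⟨hy₂, hx₂⟩ := colour_eq_two_iff.1 (hp 2)
  have hx₁₀ : v (p 1 0 - p 0 0) = v (p 1 0) := v.map_sub_eq_of_lt_left (hx₀.trans_le hx₁)
  have hy₂₀ : v (p 2 1 - p 0 1) = v (p 2 1) := v.map_sub_eq_of_lt_left (hy₀.trans_le hy₂)
  have hy₁₀ : v (p 1 1 - p 0 1) ≤ v (p 1 0) := v.map_sub_le hy₁ (hy₀.le.trans hx₁)
  have hx₂₀ : v (p 2 0 - p 0 0) < v (p 2 1) := v.map_sub_lt hx₂ (hx₀.trans_le hy₂)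
  have dominated : v ((p 1 1 - p 0 1) * (p 2 0 - p 0 0)) <
      v ((p 1 0 - p 0 0) * (p 2 1 - p 0 1)) := by
    rw [map_mul, map_mul, hx₁₀, hy₂₀]
    exact mul_lt_mul_of_le_of_lt_of_nonneg_of_pos hy₁₀ hx₂₀ zero_le (zero_lt_one.trans_le hx₁)
  rw [doubleArea_eq, v.map_sub_eq_of_lt_left dominated, map_mul, hx₁₀, hy₂₀]
  exact one_le_mul hx₁ hy₂

theorem one_le_valuation_doubleArea_of_surjective {p : Fin 3 → EuclideanSpace K (Fin 2)}
    (hp : Function.Surjective (colour v ∘ p)) : 1 ≤ v (doubleArea p) := by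
  let σ : Equiv.Perm (Fin 3) :=
    Equiv.ofBijective (colour v ∘ p) (Finite.surjective_iff_bijective.1 hp)
  have rainbow := one_le_valuation_doubleArea_of_colour_eq (v := v) (p := p ∘ σ.symm)
    fun k => σ.apply_symm_apply k
  rw [doubleArea_comp_perm, map_mul] at rainbow
  rcases Int.units_eq_one_or (Equiv.Perm.sign σ.symm) with h | h <;> simpa [h] using rainbow

/-- The indicator of the segments whose endpoints have colours `0` and `1`. -/
def zeroOneEdge (a b : Fin 3) : ZMod 2 :=
  if s(a, b) = s(0, 1) then 1 else 0

theorem zeroOneEdge_comm (a b : Fin 3) : zeroOneEdge a b = zeroOneEdge b a := by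
  rw [zeroOneEdge, Sym2.eq_swap, zeroOneEdge]

theorem surjective_of_boundarySum_zeroOneEdge_ne_zero :
    ∀ c : Fin 3 → Fin 3, boundarySum zeroOneEdge c ≠ 0 → Function.Surjective c := by
  decide

variable (v) in
/-- The indicator of the segments of the plane whose endpoints have colours `0` and `1`. -/
def colourEdge (p q : EuclideanSpace K (Fin 2)) : ZMod 2 :=
  zeroOneEdge (colour v p) (colour v q)

theorem one_le_valuation_doubleArea_of_boundarySum_ne_zero {p : Fin 3 → EuclideanSpace K (Fin 2)}
    (hp : boundarySum (colourEdge v) p ≠ 0) : 1 ≤ v (doubleArea p) :=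
  one_le_valuation_doubleArea_of_surjective
    (surjective_of_boundarySum_zeroOneEdge_ne_zero (colour v ∘ p) hp)

theorem isAdditiveOnLines_colourEdge (v : Valuation ℝ Γ₀) : IsAdditiveOnLines (colourEdge v) := by
  intro p q r hpqr
  have flat : doubleArea ![p, q, r] = 0 := doubleArea_eq_zero_of_collinear (by
    rwa [Matrix.range_cons, Matrix.range_cons_cons_empty, singleton_union])
  have boundary : boundarySum (colourEdge v) ![p, q, r] = 0 := by
    by_contra h
    have := one_le_valuation_doubleArea_of_boundarySum_ne_zero h
    rw [flat, map_zero] at this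
    exact this.not_gt zero_lt_one
  have sides : colourEdge v q r + colourEdge v r p + colourEdge v p q = 0 := by
    simpa [boundarySum, Fin.sum_univ_three] using boundary
  rw [CharTwo.add_eq_zero] at sides
  rw [← sides, add_comm, colourEdge, colourEdge, colourEdge, zeroOneEdge_comm (colour v r)]

end Colouring

section Measure

variable {E : Type*} [NormedAddCommGroup E] [NormedSpace ℝ E] [MeasurableSpace E]
  (μ : Measure E)

theorem measure_image_affineMap [BorelSpace E] [FiniteDimensional ℝ E] [μ.IsAddHaarMeasure]
    (A : E →ᵃ[ℝ] E) (s : Set E) : μ (A '' s) = ENNReal.ofReal |LinearMap.det A.linear| * μ s := by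
  have image_eq : A '' s = (fun x => x + A 0) '' (A.linear '' s) := by
    rw [image_image]
    exact image_congr fun x _ => congr_fun A.decomp x
  rw [image_eq, image_add_right, measure_preimage_add_right, Measure.addHaar_image_linearMap]

theorem measure_convexHull_range_ne_zero [μ.IsOpenPosMeasure] {ι : Type*} [Finite ι]
    (b : AffineBasis ι ℝ E) : μ (convexHull ℝ (range b)) ≠ 0 := by
  cases nonempty_fintype ι
  exact (Measure.measure_pos_of_nonempty_interior μ ⟨_, b.centroid_mem_interior_convexHull⟩).ne'

theorem measure_convexHull_range_ne_top [IsFiniteMeasureOnCompacts μ] {ι : Type*} [Finite ι]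
    (p : ι → E) : μ (convexHull ℝ (range p)) ≠ ⊤ :=
  ((finite_range p).isCompact_convexHull ℝ).measure_lt_top.ne

end Measure

section Plane

/-- Three affinely independent points of the plane as an affine basis. -/
def triangleBasis (p : Fin 3 → EuclideanSpace ℝ (Fin 2)) (hp : AffineIndependent ℝ p) :
    AffineBasis (Fin 3) ℝ (EuclideanSpace ℝ (Fin 2)) where
  toFun := p
  ind' := hp
  tot' := by simp [hp.affineSpan_eq_top_iff_card_eq_finrank_add_one]

@[simp]
theorem coe_triangleBasis {p : Fin 3 → EuclideanSpace ℝ (Fin 2)} (hp : AffineIndependent ℝ p) :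
    ⇑(triangleBasis p hp) = p :=
  rfl

theorem affineIndependent_of_doubleArea_ne_zero {p : Fin 3 → EuclideanSpace ℝ (Fin 2)}
    (hp : doubleArea p ≠ 0) : AffineIndependent ℝ p :=
  affineIndependent_iff_not_collinear.2 (mt doubleArea_eq_zero_of_collinear hp)

/-- The half of the unit square below the antidiagonal. -/
def lowerTriangle : AffineBasis (Fin 3) ℝ (EuclideanSpace ℝ (Fin 2)) :=
  triangleBasis ![!₂[0, 0], !₂[1, 0], !₂[0, 1]]
    (affineIndependent_of_doubleArea_ne_zero (by simp [doubleArea_eq]))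

/-- The half of the unit square above the antidiagonal. -/
def upperTriangle : AffineBasis (Fin 3) ℝ (EuclideanSpace ℝ (Fin 2)) :=
  triangleBasis ![!₂[1, 1], !₂[0, 1], !₂[1, 0]]
    (affineIndependent_of_doubleArea_ne_zero (by simp [doubleArea_eq]))

theorem doubleArea_lowerTriangle : doubleArea lowerTriangle = 1 := by
  simp [lowerTriangle, doubleArea_eq]

theorem doubleArea_upperTriangle : doubleArea upperTriangle = 1 := by
  simp [upperTriangle, doubleArea_eq]

/-- The affine map of the plane that carries the vertices of `lowerTriangle` to `p`. -/
noncomputable def triangleMap (p : Fin 3 → EuclideanSpace ℝ (Fin 2)) :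
    EuclideanSpace ℝ (Fin 2) →ᵃ[ℝ] EuclideanSpace ℝ (Fin 2) :=
  ((EuclideanSpace.basisFun (Fin 2) ℝ).toBasis.constr ℝ ![p 1 - p 0, p 2 - p 0]).toAffineMap +
    AffineMap.const ℝ _ (p 0)

theorem triangleMap_lowerTriangle (p : Fin 3 → EuclideanSpace ℝ (Fin 2)) (k : Fin 3) :
    triangleMap p (lowerTriangle k) = p k := by
  fin_cases k <;> simp [triangleMap, lowerTriangle, Basis.constr_apply_fintype]

theorem det_linear_triangleMap (p : Fin 3 → EuclideanSpace ℝ (Fin 2)) :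
    LinearMap.det (triangleMap p).linear = doubleArea p := by
  have entry (i j : Fin 2) :
      LinearMap.toMatrix (EuclideanSpace.basisFun (Fin 2) ℝ).toBasis
        (EuclideanSpace.basisFun (Fin 2) ℝ).toBasis (triangleMap p).linear i j =
      ![p 1 - p 0, p 2 - p 0] j i := by
    simp [triangleMap, LinearMap.toMatrix_apply, Basis.constr_apply_fintype]
  rw [← LinearMap.det_toMatrix (EuclideanSpace.basisFun (Fin 2) ℝ).toBasis, Matrix.det_fin_two,
    doubleArea_eq]
  simp only [entry, Matrix.cons_val, PiLp.sub_apply]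
  ring

theorem measure_convexHull_eq_doubleArea_mul (μ : Measure (EuclideanSpace ℝ (Fin 2)))
    [μ.IsAddHaarMeasure] (p : Fin 3 → EuclideanSpace ℝ (Fin 2)) :
    μ (convexHull ℝ (range p)) =
      ENNReal.ofReal |doubleArea p| * μ (convexHull ℝ (range lowerTriangle)) := by
  rw [← det_linear_triangleMap, ← measure_image_affineMap, AffineMap.image_convexHull,
    ← range_comp, show triangleMap p ∘ lowerTriangle = p from funext (triangleMap_lowerTriangle p)]

theorem abs_doubleArea_eq_of_volume_eq {p q : Fin 3 → EuclideanSpace ℝ (Fin 2)}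
    (h : volume (convexHull ℝ (range p)) = volume (convexHull ℝ (range q))) :
    |doubleArea p| = |doubleArea q| := by
  rwa [measure_convexHull_eq_doubleArea_mul, measure_convexHull_eq_doubleArea_mul volume q,
    ENNReal.mul_left_inj (measure_convexHull_range_ne_zero _ _)
      (measure_convexHull_range_ne_top _ _),
    ENNReal.ofReal_eq_ofReal_iff (abs_nonneg _) (abs_nonneg _)] at h

variable {κ κ' : Type*} [Fintype κ] [Fintype κ']
  {T : κ → AffineBasis (Fin 3) ℝ (EuclideanSpace ℝ (Fin 2))}
  {U : κ' → AffineBasis (Fin 3) ℝ (EuclideanSpace ℝ (Fin 2))} {S : Set (EuclideanSpace ℝ (Fin 2))}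

theorem IsDissection.volume_eq_sum_abs_doubleArea (hT : IsDissection T S) :
    volume S = ENNReal.ofReal (∑ i, |doubleArea (T i)|) *
      volume (convexHull ℝ (range lowerTriangle)) := by
  rw [hT.measure_eq_sum volume, ENNReal.ofReal_sum_of_nonneg fun _ _ => abs_nonneg _,
    Finset.sum_mul]
  exact Finset.sum_congr rfl fun i _ => measure_convexHull_eq_doubleArea_mul _ _

theorem IsDissection.sum_abs_doubleArea_eq (hT : IsDissection T S) (hU : IsDissection U S) :
    ∑ i, |doubleArea (T i)| = ∑ j, |doubleArea (U j)| := by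
  have h := hT.volume_eq_sum_abs_doubleArea.symm.trans hU.volume_eq_sum_abs_doubleArea
  rwa [ENNReal.mul_left_inj (measure_convexHull_range_ne_zero _ _)
      (measure_convexHull_range_ne_top _ _), ENNReal.ofReal_eq_ofReal_iff
      (Finset.sum_nonneg fun _ _ => abs_nonneg _) (Finset.sum_nonneg fun _ _ => abs_nonneg _)] at h

end Plane

section UnitSquare

theorem coord_eq_of_sum_smul_eq {ι E : Type*} [Fintype ι] [AddCommGroup E] [Module ℝ E]
    (b : AffineBasis ι ℝ E) {w : ι → ℝ} {x : E} (hw : ∑ k, w k = 1) (hx : ∑ k, w k • b k = x) :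
    (b.coord · x) = w := by
  ext k
  rw [← hx, ← Finset.affineCombination_eq_linear_combination _ _ _ hw,
    b.coord_apply_combination_of_mem (Finset.mem_univ k) hw]

theorem coord_lowerTriangle (x : EuclideanSpace ℝ (Fin 2)) :
    (lowerTriangle.coord · x) = ![1 - x 0 - x 1, x 0, x 1] := by
  apply coord_eq_of_sum_smul_eq
  · simp only [Fin.sum_univ_three, Matrix.cons_val]
    ring
  · ext i
    fin_cases i <;> simp [lowerTriangle, Fin.sum_univ_three]

theorem coord_upperTriangle (x : EuclideanSpace ℝ (Fin 2)) :
    (upperTriangle.coord · x) = ![x 0 + x 1 - 1, 1 - x 0, 1 - x 1] := by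
  apply coord_eq_of_sum_smul_eq
  · simp [Fin.sum_univ_three]
  · ext i
    fin_cases i <;> simp [upperTriangle, Fin.sum_univ_three]

/-- The square `[0, 1] × [0, 1]`. -/
def unitSquare : Set (EuclideanSpace ℝ (Fin 2)) :=
  {x | ∀ i, x i ∈ Icc (0 : ℝ) 1}

theorem mem_convexHull_lowerTriangle {x : EuclideanSpace ℝ (Fin 2)} :
    x ∈ convexHull ℝ (range lowerTriangle) ↔ 0 ≤ 1 - x 0 - x 1 ∧ 0 ≤ x 0 ∧ 0 ≤ x 1 := by
  rw [AffineBasis.convexHull_eq_nonneg_coord, mem_ofPred_eq]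
  simp [congr_fun (coord_lowerTriangle x), Fin.forall_fin_succ]

theorem mem_convexHull_upperTriangle {x : EuclideanSpace ℝ (Fin 2)} :
    x ∈ convexHull ℝ (range upperTriangle) ↔ 0 ≤ x 0 + x 1 - 1 ∧ 0 ≤ 1 - x 0 ∧ 0 ≤ 1 - x 1 := by
  rw [AffineBasis.convexHull_eq_nonneg_coord, mem_ofPred_eq]
  simp [congr_fun (coord_upperTriangle x), Fin.forall_fin_succ]

theorem convexHull_lowerTriangle_union_upperTriangle :
    convexHull ℝ (range lowerTriangle) ∪ convexHull ℝ (range upperTriangle) = unitSquare := by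
  ext x
  rw [mem_union, mem_convexHull_lowerTriangle, mem_convexHull_upperTriangle, unitSquare,
    mem_ofPred_eq, Fin.forall_fin_two, mem_Icc, mem_Icc]
  grind

theorem disjoint_interior_lowerTriangle_upperTriangle :
    Disjoint (interior (convexHull ℝ (range lowerTriangle)))
      (interior (convexHull ℝ (range upperTriangle))) := by
  rw [disjoint_left]
  intro x hlower hupper
  rw [AffineBasis.interior_convexHull] at hlower hupper
  have below : 0 < 1 - x 0 - x 1 := (hlower 0).trans_eq (congr_fun (coord_lowerTriangle x) 0)
  have above : 0 < x 0 + x 1 - 1 := (hupper 0).trans_eq (congr_fun (coord_upperTriangle x) 0)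
  linarith

theorem isDissection_unitSquare : IsDissection ![lowerTriangle, upperTriangle] unitSquare where
  pairwise_disjoint := by
    intro i j hij
    fin_cases i <;> fin_cases j
    · exact absurd rfl hij
    · exact disjoint_interior_lowerTriangle_upperTriangle
    · exact disjoint_interior_lowerTriangle_upperTriangle.symm
    · exact absurd rfl hij
  iUnion_eq := by
    rw [← convexHull_lowerTriangle_union_upperTriangle]
    ext x
    simp [Fin.exists_fin_two]

variable {κ : Type*} {T : κ → AffineBasis (Fin 3) ℝ (EuclideanSpace ℝ (Fin 2))}

theorem IsDissection.sum_abs_doubleArea_eq_two [Fintype κ] (hT : IsDissection T unitSquare) :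
    ∑ i, |doubleArea (T i)| = 2 := by
  rw [hT.sum_abs_doubleArea_eq isDissection_unitSquare, Fin.sum_univ_two]
  change |doubleArea lowerTriangle| + |doubleArea upperTriangle| = 2
  rw [doubleArea_lowerTriangle, doubleArea_upperTriangle, abs_one, one_add_one_eq_two]

variable {Γ₀ : Type*} [LinearOrderedCommGroupWithZero Γ₀]

theorem IsDissection.sum_boundarySum_colourEdge_eq_one [Fintype κ] (v : Valuation ℝ Γ₀)
    (hT : IsDissection T unitSquare) : ∑ i, boundarySum (colourEdge v) (T i) = 1 := by
  have lower : colour v ∘ lowerTriangle = ![0, 1, 2] := by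
    ext k; fin_cases k <;> simp [lowerTriangle, colour]
  have upper : colour v ∘ upperTriangle = ![1, 2, 1] := by
    ext k; fin_cases k <;> simp [upperTriangle, colour]
  rw [hT.sum_boundarySum_eq isDissection_unitSquare (isAdditiveOnLines_colourEdge v),
    Fin.sum_univ_two]
  change boundarySum zeroOneEdge (colour v ∘ lowerTriangle) +
    boundarySum zeroOneEdge (colour v ∘ upperTriangle) = 1
  rw [lower, upper]
  decide

theorem IsDissection.exists_one_le_valuation_doubleArea [Finite κ] (v : Valuation ℝ Γ₀)
    (hT : IsDissection T unitSquare) : ∃ i, 1 ≤ v (doubleArea (T i)) := by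
  cases nonempty_fintype κ
  have odd_sum : ∑ i, boundarySum (colourEdge v) (T i) ≠ 0 := by
    rw [hT.sum_boundarySum_colourEdge_eq_one v]
    exact one_ne_zero
  obtain ⟨i, -, hi⟩ := Finset.exists_ne_zero_of_sum_ne_zero odd_sum
  exact ⟨i, one_le_valuation_doubleArea_of_boundarySum_ne_zero hi⟩

end UnitSquare

section Valuations

theorem exists_valuationSubring_valuation_natCast_lt_one (K : Type*) [Field K] [CharZero K] {m : ℕ}
    (hm : m ≠ 1) : ∃ V : ValuationSubring K, V.valuation m < 1 := by
  let R : Subring K := (Int.castRingHom K).range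
  have proper : Ideal.span {(m : R)} ≠ ⊤ := by
    rw [Ne, Ideal.span_singleton_eq_top, isUnit_iff_exists_inv]
    rintro ⟨⟨_, k, rfl⟩, hk⟩
    have mul_eq_one : (m : K) * (k : K) = 1 := congr_arg Subtype.val hk
    have : (m : ℤ) ∣ 1 := ⟨k, by exact_mod_cast mul_eq_one.symm⟩
    exact hm (by exact_mod_cast Int.eq_one_of_dvd_one (by positivity) this)
  obtain ⟨V, -, hV⟩ := Ideal.image_subset_nonunits_valuationSubring _ proper
  exact ⟨V, V.mem_nonunits_iff.1 (hV ⟨m, Ideal.mem_span_singleton_self _, map_natCast _ _⟩)⟩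

theorem valuation_natCast_eq_one_of_odd {K : Type*} [Field K] {V : ValuationSubring K}
    (hV : V.valuation 2 < 1) {n : ℕ} (hn : Odd n) : V.valuation n = 1 := by
  obtain ⟨k, rfl⟩ := hn
  have even_part : V.valuation (2 * k : K) < 1 := by
    rw [map_mul]
    exact mul_lt_one_of_lt_of_le hV ((V.valuation_le_one_iff _).2 (natCast_mem V k))
  rw [Nat.cast_add, Nat.cast_mul, Nat.cast_two, Nat.cast_one, add_comm,
    Valuation.map_one_add_of_lt _ even_part]

theorem valuation_lt_one_of_natCast_mul_abs_eq_two {K : Type*} [Field K] [LinearOrder K]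
    {V : ValuationSubring K} (hV : V.valuation 2 < 1) {n : ℕ} (hn : Odd n) {d : K}
    (hd : n * |d| = 2) : V.valuation d < 1 := by
  have map_n : V.valuation (n : K) = 1 := valuation_natCast_eq_one_of_odd hV hn
  have map_abs : V.valuation |d| = V.valuation d := by
    rcases abs_choice d with h | h <;> rw [h]
    exact Valuation.map_neg _ _
  rwa [← hd, map_mul, map_n, one_mul, map_abs] at hV

end Valuations

end Monsky

open Monsky

/-- Monsky's theorem: the unit square cannot be partitioned into an odd number
of triangles of equal area. -/
theorem monsky (n : ℕ) (hn : Odd n) :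
    ¬ ∃ T : Fin n → Set (EuclideanSpace ℝ (Fin 2)),
      (∀ j, ∃ p q r : EuclideanSpace ℝ (Fin 2),
        AffineIndependent ℝ ![p, q, r] ∧ T j = convexHull ℝ {p, q, r}) ∧
      (∀ j j', j ≠ j' → Disjoint (interior (T j)) (interior (T j'))) ∧
      (⋃ j, T j) = {x : EuclideanSpace ℝ (Fin 2) | ∀ i, x i ∈ Set.Icc (0 : ℝ) 1} ∧
      (∀ j j', volume (T j) = volume (T j')) := by
  rintro ⟨S, hS, disjoint, union, equal⟩
  choose p q r independent hull using hS
  let T j := triangleBasis ![p j, q j, r j] (independent j)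
  have hull_T (j : Fin n) : convexHull ℝ (Set.range (T j)) = S j := by
    rw [hull, coe_triangleBasis, Matrix.range_cons, Matrix.range_cons_cons_empty,
      Set.singleton_union]
  have dissection : IsDissection T unitSquare :=
    ⟨fun i j hij => by simpa only [hull_T] using disjoint i j hij,
      (Set.iUnion_congr hull_T).trans union⟩
  obtain ⟨V, hV⟩ := exists_valuationSubring_valuation_natCast_lt_one ℝ (m := 2) (by norm_num)
  obtain ⟨i, hi⟩ := dissection.exists_one_le_valuation_doubleArea V.valuation
  have equal_areas (j : Fin n) : |doubleArea (T j)| = |doubleArea (T i)| :=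
    abs_doubleArea_eq_of_volume_eq (by rw [hull_T, hull_T, equal])
  have total : n * |doubleArea (T i)| = 2 := by
    rw [← dissection.sum_abs_doubleArea_eq_two, Finset.sum_congr rfl fun j _ => equal_areas j]
    simp
  exact hi.not_gt (valuation_lt_one_of_natCast_mul_abs_eq_two (by exact_mod_cast hV) hn total)
end
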